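/- arXiv:math/0509474 — 2 statements merged into one kernel-verified Lean document; each statement's English description precedes it below -/
import Mathlib

section
/- Let q = r² for a prime power r and let F be the set of all Hermitian self-dual codes in F_q^{2n} (assumed nonempty). Then for each 0 ≤ m ≤ n, the subspace Y_m is exactly the eigenspace of the Kneser–Hecke operator T with eigenvalue ν_m = (r·q^{n−m} − q^m − r + 1)/(q−1). -/
noncomputable section

namespace KneserHeckeCodes

open Finset

variable {F : Type} [Field F] [Fintype F]

/-- The all-ones vector. -/
def allOnes (F : Type) [One F] (N : ℕ) : Fin N → F := fun _ => 1

/-- The dual code with respect to the (bilinear or Hermitian) form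
`b(x,y) = ∑ i, x i * f (y i)`. -/
def dualCode {N : ℕ} (f : F → F) (C : Submodule F (Fin N → F)) : Submodule F (Fin N → F) where
  carrier := {v | ∀ c ∈ C, ∑ i, v i * f (c i) = 0}
  add_mem' := by
    intro a b ha hb c hc
    have h1 := ha c hc
    have h2 := hb c hc
    change ∑ i, (a + b) i * f (c i) = 0
    simp [Pi.add_apply, add_mul, Finset.sum_add_distrib, h1, h2]
  zero_mem' := by
    intro c hc
    simp
  smul_mem' := by
    intro r a ha c hc
    have h := ha c hc
    change ∑ i, (r • a) i * f (c i) = 0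
    simp [Pi.smul_apply, smul_eq_mul, mul_assoc, ← Finset.mul_sum, h]

/-- Action of a coordinate permutation on a code. -/
def permCode {N : ℕ} (π : Equiv.Perm (Fin N)) (C : Submodule F (Fin N → F)) :
    Submodule F (Fin N → F) :=
  C.map (LinearMap.funLeft F F π)

/-- Permutation equivalence of codes. -/
def equivCode {N : ℕ} (C D : Submodule F (Fin N → F)) : Prop :=
  ∃ π : Equiv.Perm (Fin N), permCode π C = D

/-- The order of the automorphism group of a code. -/
def autCard {N : ℕ} (C : Submodule F (Fin N → F)) : ℕ :=
  Nat.card {π : Equiv.Perm (Fin N) // permCode π C = C}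

/-- `mon c v` is the number of columns of the `m × N` matrix with rows `c` equal to `v`. -/
def mon {m N : ℕ} (c : Fin m → (Fin N → F)) (v : Fin m → F) : ℕ :=
  Nat.card {i : Fin N // ∀ j, c j i = v j}

/-- `aX X C` is the number of `m`-tuples of codewords of `C` with monomial `X`. -/
def aX {m N : ℕ} (X : (Fin m → F) → ℕ) (C : Submodule F (Fin N → F)) : ℕ :=
  Nat.card {c : Fin m → (Fin N → F) // (∀ j, c j ∈ C) ∧ mon c = X}

/-- The set `M_m` of monomials of degree `N` in genus `m`. -/
def MmSet (F : Type) [Fintype F] (m N : ℕ) : Set ((Fin m → F) → ℕ) :=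
  {X | ∑ v, X v = N}

/-- The rank of a monomial. -/
def rkX (F : Type) [Field F] {m : ℕ} (X : (Fin m → F) → ℕ) : ℕ :=
  Module.finrank F (Submodule.span F {v : Fin m → F | 0 < X v})

/-- The set `M*_m` of monomials of degree `N` and full rank `m`. -/
def MstarSet (F : Type) [Field F] [Fintype F] (m N : ℕ) : Set ((Fin m → F) → ℕ) :=
  {X | X ∈ MmSet F m N ∧ rkX F X = m}

instance finiteSubmodule {N : ℕ} : Finite (Submodule F (Fin N → F)) :=
  Finite.of_injective (fun C => (C : Set (Fin N → F))) SetLike.coe_injective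

/-- The set of equivalence classes of codes in the family `𝓕`. -/
abbrev ClassesB {N : ℕ} (𝓕 : Set (Submodule F (Fin N → F))) : Type :=
  Quot (fun C D : 𝓕 => equivCode C.1 D.1)

/-- The equivalence class of a code. -/
def clsOf {N : ℕ} {𝓕 : Set (Submodule F (Fin N → F))} (C : 𝓕) : ClassesB 𝓕 :=
  Quot.mk _ C

/-- A representative of an equivalence class. -/
def repB {N : ℕ} {𝓕 : Set (Submodule F (Fin N → F))} (b : ClassesB 𝓕) : 𝓕 :=
  Quot.out b

/-- The Hermitian inner product on `V` with `([C],[D]) = |Aut C| δ_{[C],[D]}`. -/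
def innerV {N : ℕ} (𝓕 : Set (Submodule F (Fin N → F))) (v w : ClassesB 𝓕 → ℂ) : ℂ :=
  letI : Fintype (ClassesB 𝓕) := Fintype.ofFinite _
  ∑ b : ClassesB 𝓕, (starRingEnd ℂ) (v b) * w b * (autCard (repB b).1 : ℂ)

/-- The `k`-th Kneser-Hecke operator `T_k` on `V`, where `n` is the dimension of the codes:
`T_k [C] = ∑_{D ∈ 𝓕, dim (C ⊓ D) = n - k} [D]`. -/
def heckeT {N : ℕ} (𝓕 : Set (Submodule F (Fin N → F))) (n k : ℕ)
    (v : ClassesB 𝓕 → ℂ) : ClassesB 𝓕 → ℂ :=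
  letI : Fintype (ClassesB 𝓕) := Fintype.ofFinite _
  fun b' => ∑ b : ClassesB 𝓕, v b *
    (Nat.card {D : 𝓕 // Module.finrank F ↥((repB b).1 ⊓ D.1) + k = n ∧ clsOf D = b'} : ℂ)

/-- The linear extension of `a_X` to `V`. -/
def aXc {N m : ℕ} (𝓕 : Set (Submodule F (Fin N → F))) (X : (Fin m → F) → ℕ)
    (v : ClassesB 𝓕 → ℂ) : ℂ :=
  letI : Fintype (ClassesB 𝓕) := Fintype.ofFinite _
  ∑ b : ClassesB 𝓕, v b * (aX X (repB b).1 : ℂ)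

/-- `V_m`, the joint kernel of all `a_X`, `X ∈ M_m`. -/
def VmSet {N : ℕ} (𝓕 : Set (Submodule F (Fin N → F))) (m : ℕ) : Set (ClassesB 𝓕 → ℂ) :=
  {v | ∀ X ∈ MmSet F m N, aXc 𝓕 X v = 0}

/-- `V_{m-1}` (with `V_{-1} = V`). -/
def VmPred {N : ℕ} (𝓕 : Set (Submodule F (Fin N → F))) (m : ℕ) : Set (ClassesB 𝓕 → ℂ) :=
  match m with
  | 0 => Set.univ
  | m + 1 => VmSet 𝓕 m

/-- `W_m = V_m^⊥`. -/
def WmSet {N : ℕ} (𝓕 : Set (Submodule F (Fin N → F))) (m : ℕ) : Set (ClassesB 𝓕 → ℂ) :=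
  {w | ∀ v ∈ VmSet 𝓕 m, innerV 𝓕 w v = 0}

/-- `Y_m = W_m ∩ V_{m-1}`. -/
def YmSet {N : ℕ} (𝓕 : Set (Submodule F (Fin N → F))) (m : ℕ) : Set (ClassesB 𝓕 → ℂ) :=
  WmSet 𝓕 m ∩ VmPred 𝓕 m

/-- `∑_{E ∈ E_C(c)} α_E`, counted as the number of pairs `(E, D)` with `E ≤ C` of
dimension `n-1` containing all entries of `c` and `D ∈ 𝓕` with `D ⊓ C = E`. -/
def pairCount {N : ℕ} (𝓕 : Set (Submodule F (Fin N → F))) (n : ℕ)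
    (C : Submodule F (Fin N → F)) {m : ℕ} (c : Fin m → (Fin N → F)) : ℕ :=
  Nat.card {ED : Submodule F (Fin N → F) × 𝓕 //
    ED.1 ≤ C ∧ Module.finrank F ↥ED.1 + 1 = n ∧ (∀ j, c j ∈ ED.1) ∧ ED.2.1 ⊓ C = ED.1}

/-- Condition ⋆ at level `m` for the subset `M⁰ ⊆ M*_m` with constant `α`. -/
def CondStar {N : ℕ} (𝓕 : Set (Submodule F (Fin N → F))) (n m : ℕ)
    (M0 : Set ((Fin m → F) → ℕ)) (α : ℕ) : Prop :=
  M0 ⊆ MstarSet F m N ∧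
  VmSet 𝓕 m = {v | v ∈ VmPred 𝓕 m ∧ ∀ X ∈ M0, aXc 𝓕 X v = 0} ∧
  ∀ C ∈ 𝓕, ∀ c : Fin m → (Fin N → F), (∀ j, c j ∈ C) → mon c ∈ M0 →
    pairCount 𝓕 n C c = α

/-- The genus-`m` complete weight enumerator. -/
def cwe {N : ℕ} (m : ℕ) (C : Submodule F (Fin N → F)) : MvPolynomial (Fin m → F) ℂ :=
  letI : Fintype C := Fintype.ofFinite _
  ∑ c : Fin m → C, MvPolynomial.monomial
    (Finsupp.equivFunOnFinite.symm (mon (fun j => (c j : Fin N → F)))) (1 : ℂ)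

end KneserHeckeCodes

open KneserHeckeCodes

/-!
Sending a class `[C]` to the sum of `π(C)` over all coordinate permutations embeds `V` into the
space of functions on codes, compatibly with the inner products and with the neighbour operator.
There `V_m` becomes the set of functions `f` such that `∑ f(C)` over the codes `C ⊇ U` vanishes
for every `U` of dimension at most `m`, because the monomial of a tuple determines the span of its
entries up to a coordinate permutation.

The counting input is that a self-dual code `C` of dimension `n` and an isotropic space `U` of
dimension `m` have `ν_m · [U ≤ C] + #{H ⋖ U | H ≤ C}` neighbours of `C` containing `U`: if `U ≤ C`
they lie over the hyperplanes of `C` that contain `U`, with `r` neighbours for each, and otherwise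
the only candidate is `(C ⊓ U^⊥) ⊔ U`. Therefore `T - ν_m` maps `V_{m-1}` into `V_m`. Since `T` is
self-adjoint and the `ν_m` are distinct and real, the eigenspaces of `T` are the orthogonal
complements of `V_m` in `V_{m-1}`.
-/

namespace KneserHeckeCodes

section FilteredOperator

open Module

variable {K E : Type*} [Field K] [AddCommGroup E] [Module K E] {σ : K →+* K}
  {B : E →ₛₗ[σ] E →ₗ[K] K} {T : End K E} {ν : ℕ → K} {n : ℕ} {V : ℕ → Submodule K E}

theorem orthogonalBilin_inf_le_eigenspace (hB : ∀ x, B x x = 0 → x = 0)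
    (hT : ∀ x y, B (T x) y = B x (T y)) {a : K} {W V : Submodule K E} (hWV : W ≤ V)
    (hW : ∀ x ∈ V, T x - a • x ∈ W) : W.orthogonalBilin B ⊓ V ≤ T.eigenspace a := by
  rintro x ⟨hxW, hxV⟩
  set u := T x - a • x
  have hu : u ∈ W := hW x hxV
  have hTu : T u ∈ W := by
    simpa using W.add_mem (hW u (hWV hu)) (W.smul_mem a hu)
  have huu : B u u = 0 := calc
    B u u = B (T u) x - a * B u x := by
      rw [hT, ← smul_eq_mul, ← map_smul, ← map_sub]
    _ = 0 := by
      rw [(hxW : ∀ w ∈ W, B w x = 0) u hu, (hxW : ∀ w ∈ W, B w x = 0) _ hTu, mul_zero, sub_zero]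
  exact Module.End.mem_eigenspace_iff.2 (sub_eq_zero.1 (hB u huu))

theorem eigenspace_le_of_forall_sub_smul_mem (hν : Set.InjOn ν (Set.Iic n)) (hV0 : V 0 = ⊤)
    (hstep : ∀ j ≤ n, ∀ x ∈ V j, T x - ν j • x ∈ V (j + 1)) {m : ℕ} (hm : m ≤ n) :
    ∀ j ≤ m, T.eigenspace (ν m) ≤ V j := by
  intro j
  induction j with
  | zero => simp [hV0]
  | succ j ih =>
    intro hj x hx
    have hmem : (ν m - ν j) • x ∈ V (j + 1) := by
      rw [sub_smul, ← Module.End.mem_eigenspace_iff.1 hx]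
      exact hstep j (by omega) x (ih (by omega) hx)
    have hne : ν m - ν j ≠ 0 := sub_ne_zero.2 fun h ↦ by
      have := hν hm (by simp; omega) h
      omega
    exact ((V (j + 1)).smul_mem_iff hne).1 hmem

theorem eigenspace_le_orthogonalBilin (hT : ∀ x y, B (T x) y = B x (T y))
    (hσ : ∀ j, σ (ν j) = ν j) (hν : Set.InjOn ν (Set.Iic n)) (hVn : V (n + 1) = ⊥)
    (hstep : ∀ j ≤ n, ∀ x ∈ V j, T x - ν j • x ∈ V (j + 1)) {m : ℕ} (hm : m ≤ n) :
    T.eigenspace (ν m) ≤ (V (m + 1)).orthogonalBilin B := by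
  suffices h : ∀ j ≤ n + 1, m < j → ∀ w ∈ V j, ∀ x ∈ T.eigenspace (ν m), B w x = 0 from
    fun x hx w hw ↦ h (m + 1) (by omega) (by omega) w hw x hx
  intro j hj
  induction hj using Nat.decreasingInduction with
  | self =>
    rintro - w hw x -
    simp [(Submodule.mem_bot K).1 (hVn ▸ hw)]
  | of_succ j hj ih =>
    intro hmj w hw x hx
    have hprod : (ν m - ν j) * B w x = 0 := calc
      (ν m - ν j) * B w x = B (T w - ν j • w) x := by
        simp [hT, Module.End.mem_eigenspace_iff.1 hx, hσ, sub_mul]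
      _ = 0 := ih (by omega) _ (hstep j (by omega) w hw) x hx
    have hne : ν m - ν j ≠ 0 := sub_ne_zero.2 fun h ↦ by
      have := hν hm (by simp; omega) h
      omega
    exact (mul_eq_zero.1 hprod).resolve_left hne

theorem orthogonalBilin_inf_eq_eigenspace (hB : ∀ x, B x x = 0 → x = 0)
    (hT : ∀ x y, B (T x) y = B x (T y)) (hσ : ∀ j, σ (ν j) = ν j)
    (hν : Set.InjOn ν (Set.Iic n)) (hV : Antitone V) (hV0 : V 0 = ⊤) (hVn : V (n + 1) = ⊥)
    (hstep : ∀ j ≤ n, ∀ x ∈ V j, T x - ν j • x ∈ V (j + 1)) {m : ℕ} (hm : m ≤ n) :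
    (V (m + 1)).orthogonalBilin B ⊓ V m = T.eigenspace (ν m) :=
  le_antisymm (orthogonalBilin_inf_le_eigenspace hB hT (hV m.le_succ) (hstep m hm))
    (le_inf (eigenspace_le_orthogonalBilin hT hσ hν hVn hstep hm)
      (eigenspace_le_of_forall_sub_smul_mem hν hV0 hstep hm m le_rfl))

end FilteredOperator

section Polarity

variable {L : Type*} [Lattice L] {perp : L → L} {a b C D E U : L}

theorem polar_sup (hanti : Antitone perp) (hinv : Function.Involutive perp) (a b : L) :
    perp (a ⊔ b) = perp a ⊓ perp b := by
  refine le_antisymm (le_inf (hanti le_sup_left) (hanti le_sup_right)) ?_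
  rw [← hinv (perp a ⊓ perp b)]
  exact hanti (sup_le (by simpa only [hinv a] using hanti (inf_le_left : perp a ⊓ perp b ≤ _))
    (by simpa only [hinv b] using hanti (inf_le_right : perp a ⊓ perp b ≤ _)))

theorem polar_inf (hanti : Antitone perp) (hinv : Function.Involutive perp) (a b : L) :
    perp (a ⊓ b) = perp a ⊔ perp b := by
  rw [← hinv (perp a ⊔ perp b), polar_sup hanti hinv, hinv, hinv]

theorem polar_covBy_polar_iff (hanti : Antitone perp) (hinv : Function.Involutive perp) :
    perp a ⋖ perp b ↔ b ⋖ a := by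
  have hle : ∀ {x y}, perp y ≤ perp x ↔ x ≤ y := fun {x y} ↦
    ⟨fun h ↦ by simpa only [hinv x, hinv y] using hanti h, fun h ↦ hanti h⟩
  let e : L ≃o Lᵒᵈ := { hinv.toPerm.trans OrderDual.toDual with map_rel_iff' := hle }
  exact toDual_covBy_toDual_iff.symm.trans (apply_covBy_apply_iff e)

theorem inf_polar_eq_of_covBy (hanti : Antitone perp) (hinv : Function.Involutive perp)
    (hC : perp C = C) (hEC : E ⋖ C) (hUE : U ≤ perp E) (hUC : ¬U ≤ C) : C ⊓ perp U = E := by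
  have hEU : E ≤ perp U := by simpa only [hinv E] using hanti hUE
  refine (hEC.eq_or_eq (le_inf hEC.le hEU) inf_le_left).resolve_right fun h ↦ hUC ?_
  rw [← hC, ← hinv U]
  exact hanti (inf_eq_left.1 h)

/-- For a self-polar `C` and an isotropic `U`, this is the self-polar element containing `U`
that is as close to `C` as possible. -/
def polarNeighbor (perp : L → L) (C U : L) : L :=
  C ⊓ perp U ⊔ U

variable [IsModularLattice L]

theorem polar_polarNeighbor (hanti : Antitone perp) (hinv : Function.Involutive perp)
    (hC : perp C = C) (hU : U ≤ perp U) :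
    perp (polarNeighbor perp C U) = polarNeighbor perp C U := calc
  perp (C ⊓ perp U ⊔ U) = perp (perp (C ⊔ U) ⊔ U) := by rw [polar_sup hanti hinv C U, hC]
  _ = (U ⊔ C) ⊓ perp U := by rw [polar_sup hanti hinv, hinv, sup_comm]
  _ = C ⊓ perp U ⊔ U := by rw [sup_inf_assoc_of_le C hU, sup_comm]

theorem inf_polarNeighbor (hU : U ≤ perp U) : C ⊓ polarNeighbor perp C U = C ⊓ perp U := calc
  C ⊓ (C ⊓ perp U ⊔ U) = C ⊓ perp U ⊔ U ⊓ C := by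
    rw [inf_comm, sup_inf_assoc_of_le U inf_le_left]
  _ = C ⊓ perp U := sup_eq_left.2 (le_inf inf_le_right (inf_le_left.trans hU))

theorem inf_polar_covBy_left_iff (hanti : Antitone perp) (hinv : Function.Involutive perp)
    (hC : perp C = C) : C ⊓ perp U ⋖ C ↔ C ⊓ U ⋖ U := calc
  C ⊓ perp U ⋖ C ↔ perp (C ⊔ U) ⋖ perp C := by rw [polar_sup hanti hinv, hC]
  _ ↔ C ⋖ C ⊔ U := polar_covBy_polar_iff hanti hinv
  _ ↔ C ⊓ U ⋖ U := ⟨inf_covBy_of_covBy_sup_left, covBy_sup_of_inf_covBy_right⟩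

theorem eq_polarNeighbor (hanti : Antitone perp) (hinv : Function.Involutive perp)
    (hC : perp C = C) (hD : perp D = D) (hCD : C ⊓ D ⋖ C) (hUD : U ≤ D) (hUC : ¬U ≤ C) :
    D = polarNeighbor perp C U := by
  have hDE : D ≤ perp (C ⊓ D) := hD.ge.trans (hanti inf_le_right)
  have hinf : C ⊓ perp U = C ⊓ D :=
    inf_polar_eq_of_covBy hanti hinv hC hCD (hUD.trans hDE) hUC
  have hle : polarNeighbor perp C U ≤ D := sup_le (hinf.le.trans inf_le_right) hUD
  have hU : U ≤ perp U := hUD.trans (hD.ge.trans (hanti hUD))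
  refine le_antisymm ?_ hle
  rw [← polar_polarNeighbor hanti hinv hC hU, ← hD]
  exact hanti hle

theorem ncard_neighbors_of_not_le (hanti : Antitone perp) (hinv : Function.Involutive perp)
    (hC : perp C = C) (hU : U ≤ perp U) (hUC : ¬U ≤ C) :
    {D | perp D = D ∧ C ⊓ D ⋖ C ∧ U ≤ D}.ncard = {H | H ⋖ U ∧ H ≤ C}.ncard := by
  have hiff : C ⊓ polarNeighbor perp C U ⋖ C ↔ C ⊓ U ⋖ U := by
    rw [inf_polarNeighbor hU, inf_polar_covBy_left_iff hanti hinv hC]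
  have hH : ∀ H, H ⋖ U ∧ H ≤ C → H = C ⊓ U := fun H hH ↦
    ((hH.1.eq_or_eq (le_inf hH.2 hH.1.le) inf_le_right).resolve_right
      fun h ↦ hUC (inf_eq_right.1 h)).symm
  by_cases hcov : C ⊓ U ⋖ U
  · have hl : {D | perp D = D ∧ C ⊓ D ⋖ C ∧ U ≤ D} = {polarNeighbor perp C U} :=
      Set.eq_singleton_iff_unique_mem.2
        ⟨⟨polar_polarNeighbor hanti hinv hC hU, hiff.2 hcov, le_sup_right⟩,
          fun D hD ↦ eq_polarNeighbor hanti hinv hC hD.1 hD.2.1 hD.2.2 hUC⟩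
    have hr : {H | H ⋖ U ∧ H ≤ C} = {C ⊓ U} :=
      Set.eq_singleton_iff_unique_mem.2 ⟨⟨hcov, inf_le_left⟩, hH⟩
    rw [hl, hr, Set.ncard_singleton, Set.ncard_singleton]
  · have hl : {D | perp D = D ∧ C ⊓ D ⋖ C ∧ U ≤ D} = ∅ :=
      Set.eq_empty_iff_forall_notMem.2 fun D hD ↦
        hcov (hiff.1 (eq_polarNeighbor hanti hinv hC hD.1 hD.2.1 hD.2.2 hUC ▸ hD.2.1))
    have hr : {H | H ⋖ U ∧ H ≤ C} = ∅ :=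
      Set.eq_empty_iff_forall_notMem.2 fun H hH' ↦ hcov (hH H hH' ▸ hH'.1)
    rw [hl, hr]

end Polarity

section FiniteField

open Finset

variable {F : Type*} [Field F] [Fintype F] {r : ℕ} {σ : F →+* F}

theorem one_lt_of_card_eq_sq (hcard : Fintype.card F = r ^ 2) : 1 < r := by
  have := Fintype.one_lt_card (α := F)
  rw [hcard] at this
  exact lt_of_pow_lt_pow_left₀ 2 r.zero_le (by simpa using this)

variable [DecidableEq F]

theorem card_filter_pow_add_mul_eq_le (hr : 1 < r) (a c : F) :
    #{t : F | t ^ r + a * t = c} ≤ r := by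
  open Polynomial in
  set P : F[X] := X ^ r + (C a * X - C c)
  have hlt : (C a * X - C c : F[X]).degree < r := calc
    _ = (C a * X + C (-c) : F[X]).degree := by rw [C_neg, sub_eq_add_neg]
    _ ≤ (1 : ℕ) := degree_linear_le
    _ < r := by exact_mod_cast hr
  have hP : P.Monic := monic_X_pow_add hlt
  calc #{t : F | t ^ r + a * t = c} ≤ #P.roots.toFinset := card_le_card fun t ht ↦ by
        have ht : t ^ r + a * t = c := by simpa using ht
        simpa [hP.ne_zero] using show P.IsRoot t by simp [P, ← add_sub_assoc, ht]
    _ ≤ P.natDegree := P.roots.toFinset_card_le.trans P.card_roots'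
    _ = r := natDegree_eq_of_degree_eq_some (by rw [degree_add_eq_left_of_degree_lt] <;> simp [hlt])

/-- Both the trace `t ↦ σ t + t` and the fixed field of `σ` meet the bound `r` given by the degree
of their defining polynomials, since `F` has exactly `r * r` elements. -/
theorem card_filter_map_add_eq (hcard : Fintype.card F = r ^ 2) (hσ : ∀ x, σ x = x ^ r)
    {c : F} (hc : σ c = c) : #{t : F | σ t + t = c} = r := by
  have hr := one_lt_of_card_eq_sq hcard
  have hσσ : ∀ x, σ (σ x) = x := fun x ↦ by
    rw [hσ, hσ, ← pow_mul, ← sq, ← hcard, FiniteField.pow_card]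
  have hfibre : ∀ c, #{t : F | σ t + t = c} ≤ r := fun c ↦ by
    simpa [hσ] using card_filter_pow_add_mul_eq_le hr 1 c
  have hfixed : #{s : F | σ s = s} ≤ r := by
    simpa [hσ, ← sub_eq_add_neg, sub_eq_zero] using card_filter_pow_add_mul_eq_le hr (-1 : F) 0
  have htrace : ∀ t ∈ (univ : Finset F), σ t + t ∈ ({s | σ s = s} : Finset F) := fun t _ ↦ by
    simp [hσσ, add_comm]
  refine (hfibre c).eq_of_not_lt fun hlt ↦ ?_
  have : r ^ 2 < r ^ 2 := calc
    r ^ 2 = #(univ : Finset F) := hcard.symm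
    _ = ∑ s : F with σ s = s, #{t : F | σ t + t = s} := card_eq_sum_card_fiberwise htrace
    _ < ∑ s : F with σ s = s, r :=
      sum_lt_sum (fun s _ ↦ hfibre s) ⟨c, by simpa using hc, hlt⟩
    _ = #{s : F | σ s = s} * r := by rw [sum_const, smul_eq_mul]
    _ ≤ r ^ 2 := by rw [sq]; exact Nat.mul_le_mul_right r hfixed
  exact this.false

end FiniteField

section Hyperplanes

open Module

section Subquotient

variable {R M : Type*} [Ring R] [AddCommGroup M] [Module R M] {A B : Submodule R M}

/-- The correspondence theorem for a subquotient `B / A`: its submodules are embedded in those of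
the ambient module, with image the interval `[A, B]`. For `A ≰ B` this is the subquotient
`B / (A ⊓ B)`. -/
def subquotientEmbedding (A B : Submodule R M) :
    Submodule R (B ⧸ A.comap B.subtype) ↪o Submodule R M :=
  (Submodule.comapMkQOrderEmbedding _).trans (Submodule.MapSubtype.orderEmbedding B)

theorem range_subquotientEmbedding (hAB : A ≤ B) :
    Set.range (subquotientEmbedding A B) = Set.Icc A B := by
  set A' := A.comap B.subtype
  have hA' : A'.map B.subtype = A := by simpa [A'] using hAB
  ext H
  constructor
  · rintro ⟨H, rfl⟩
    exact ⟨hA'.ge.trans (Submodule.map_mono (Submodule.le_comap_mkQ A' H)),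
      Submodule.map_subtype_le B _⟩
  · rintro ⟨hAH, hHB⟩
    let H' : Set.Ici A' := ⟨H.comap B.subtype, Submodule.comap_mono hAH⟩
    have hH' : ((Submodule.comapMkQRelIso A').symm H').comap A'.mkQ = H.comap B.subtype :=
      congrArg Subtype.val ((Submodule.comapMkQRelIso A').apply_symm_apply H')
    refine ⟨(Submodule.comapMkQRelIso A').symm H', ?_⟩
    change (((Submodule.comapMkQRelIso A').symm H').comap A'.mkQ).map B.subtype = H
    rw [hH', Submodule.map_comap_subtype, inf_eq_right.2 hHB]

theorem subquotientEmbedding_covBy_iff (hAB : A ≤ B) {H : Submodule R (B ⧸ A.comap B.subtype)} :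
    subquotientEmbedding A B H ⋖ B ↔ IsCoatom H := by
  have htop : subquotientEmbedding A B ⊤ = B := Submodule.map_subtype_top B
  rw [← covBy_top_iff, ← Set.OrdConnected.apply_covBy_apply_iff (subquotientEmbedding A B)
    (range_subquotientEmbedding hAB ▸ Set.ordConnected_Icc), htop]

theorem image_subquotientEmbedding_setOf_isCoatom (hAB : A ≤ B) :
    subquotientEmbedding A B '' {H | IsCoatom H} = {H | A ≤ H ∧ H ⋖ B} := by
  ext H
  constructor
  · rintro ⟨H, hH, rfl⟩
    exact ⟨((range_subquotientEmbedding hAB).le ⟨H, rfl⟩).1,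
      (subquotientEmbedding_covBy_iff hAB).2 hH⟩
  · rintro ⟨hAH, hHB⟩
    obtain ⟨H, rfl⟩ := (range_subquotientEmbedding hAB).ge ⟨hAH, hHB.le⟩
    exact ⟨H, (subquotientEmbedding_covBy_iff hAB).1 hHB, rfl⟩

end Subquotient

variable {K M : Type*} [Field K] [AddCommGroup M] [Module K M]

theorem natCard_isAtom_mul_add_one [Finite M] :
    Nat.card {H : Submodule K M // IsAtom H} * (Nat.card K - 1) + 1 = Nat.card M := by
  rw [Projectivization.card' K M, Nat.card_congr (Projectivization.equivSubmodule K M)]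
  simp only [Submodule.isAtom_iff_finrank_eq_one]

variable [Finite K] [FiniteDimensional K M]

theorem natCard_isCoatom_mul_add_one :
    Nat.card {H : Submodule K M // IsCoatom H} * (Nat.card K - 1) + 1 =
      Nat.card K ^ finrank K M := by
  let e := Subspace.orderIsoFiniteDimensional (K := K) (V := M)
  have : Finite (Dual K M) := Module.finite_of_finite K
  have hcongr : Nat.card {H : Submodule K M // IsCoatom H} =
      Nat.card {H : Submodule K (Dual K M) // IsAtom H} :=
    Nat.card_congr (e.toEquiv.subtypeEquiv fun H ↦ (e.isCoatom_iff H).symm)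
  rw [hcongr, natCard_isAtom_mul_add_one, natCard_eq_pow_finrank (K := K), Subspace.dual_finrank_eq]

theorem ncard_le_covBy_mul_add_one {A B : Submodule K M} (hAB : A ≤ B) :
    {H | A ≤ H ∧ H ⋖ B}.ncard * (Nat.card K - 1) + 1 =
      Nat.card K ^ (finrank K B - finrank K A) := by
  have hdim : finrank K (B ⧸ A.comap B.subtype) = finrank K B - finrank K A := by
    rw [← Submodule.finrank_quotient_add_finrank (A.comap B.subtype),
      ← (Submodule.comapSubtypeEquivOfLe hAB).finrank_eq, Nat.add_sub_cancel]
  rw [← image_subquotientEmbedding_setOf_isCoatom hAB,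
    Set.ncard_image_of_injective _ (subquotientEmbedding A B).injective, ← hdim,
    ← natCard_isCoatom_mul_add_one]
  rfl

end Hyperplanes

section SesquilinearForm

open Module Submodule

variable {K V : Type*} [Field K] [AddCommGroup V] [Module K V]

theorem covBy_iff_finrank_add_one_eq [FiniteDimensional K V] {E W : Submodule K V} (h : E ≤ W) :
    E ⋖ W ↔ finrank K E + 1 = finrank K W := by
  have hquot := Submodule.finrank_quotient_add_finrank (E.comap W.subtype)
  rw [(comapSubtypeEquivOfLe h).finrank_eq] at hquot
  rw [covBy_iff_quot_is_simple h, isSimpleModule_iff_finrank_eq_one]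
  omega

variable {σ : K →+* K} {B : V →ₛₗ[σ] V →ₗ[K] K}

theorem antitone_orthogonalBilin : Antitone (orthogonalBilin B) :=
  fun _ _ ↦ orthogonalBilin_le

theorem le_orthogonalBilin_of_le {C U : Submodule K V} (hC : C.orthogonalBilin B = C)
    (hUC : U ≤ C) : U ≤ U.orthogonalBilin B :=
  hUC.trans (hC.ge.trans (antitone_orthogonalBilin hUC))

variable [RingHomInvPair σ σ]

theorem finrank_map_of_injective_semilinear {V' : Type*} [AddCommGroup V'] [Module K V']
    {f : V →ₛₗ[σ] V'} (hf : Function.Injective f) (W : Submodule K V) :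
    finrank K (W.map f) = finrank K W := by
  have e := equivMapOfInjective f hf W
  have h := lift_rank_eq_of_equiv_equiv σ e.toAddEquiv
    (RingHomInvPair.toRingEquiv σ σ).bijective e.map_smulₛₗ
  simpa [finrank] using (congrArg Cardinal.toNat h).symm

variable [FiniteDimensional K V]

theorem finrank_add_finrank_orthogonalBilin (hB : B.SeparatingLeft) (W : Submodule K V) :
    finrank K W + finrank K (W.orthogonalBilin B) = finrank K V := by
  have hinj : Function.Injective B :=
    LinearMap.ker_eq_bot.1 (LinearMap.separatingLeft_iff_ker_eq_bot.1 hB)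
  have hperp : W.orthogonalBilin B = (W.map B).dualCoannihilator := by
    ext x
    simp [mem_dualCoannihilator, mem_orthogonalBilin_iff]
  rw [hperp, ← finrank_map_of_injective_semilinear hinj,
    Subspace.finrank_add_finrank_dualCoannihilator_eq]

theorem involutive_orthogonalBilin (hB : B.SeparatingLeft) (hr : B.IsRefl) :
    Function.Involutive (orthogonalBilin B) := fun W ↦ by
  have h := finrank_add_finrank_orthogonalBilin hB W
  have h' := finrank_add_finrank_orthogonalBilin hB (W.orthogonalBilin B)
  exact (eq_of_le_of_finrank_eq (le_orthogonalBilin_orthogonalBilin hr) (by omega)).symm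

end SesquilinearForm

section HermitianSpace

open Module Submodule

variable {F V : Type*} [Field F] [AddCommGroup V] [Module F V] {σ : F →+* F}
  {B : V →ₛₗ[σ] V →ₗ[F] F} {C D E U : Submodule F V} {c y z : V}

theorem span_singleton_sup_eq_of_covBy (hEC : E ⋖ C) (hc : c ∈ C) (hcE : c ∉ E) :
    F ∙ c ⊔ E = C :=
  (hEC.eq_or_eq le_sup_right (sup_le ((span_singleton_le_iff_mem c C).2 hc) hEC.le)).resolve_left
    fun h ↦ hcE (h ▸ mem_sup_left (mem_span_singleton_self c))

theorem mem_orthogonalBilin_span_singleton : y ∈ (F ∙ z).orthogonalBilin B ↔ B z y = 0 := by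
  rw [mem_orthogonalBilin_iff]
  refine ⟨fun h ↦ h z (mem_span_singleton_self z), fun h w hw ↦ ?_⟩
  obtain ⟨a, rfl⟩ := mem_span_singleton.1 hw
  simp [h]

theorem span_singleton_le_orthogonalBilin_iff : F ∙ z ≤ (F ∙ z).orthogonalBilin B ↔ B z z = 0 := by
  rw [span_singleton_le_iff_mem, mem_orthogonalBilin_span_singleton]

theorem eq_of_add_smul_mem_of_inf_eq (hCD : C ⊓ D = E) (hc : c ∈ C) (hcE : c ∉ E) {a a' : F}
    (ha : y + a • c ∈ D) (ha' : y + a' • c ∈ D) : a = a' := by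
  by_contra hne
  have hmem : (a - a') • c ∈ D := by
    simpa [sub_smul] using D.sub_mem ha ha'
  exact hcE (hCD ▸ ⟨hc, (D.smul_mem_iff (sub_ne_zero.2 hne)).1 hmem⟩)

theorem ncard_isotropic_add_smul [Fintype F] {r : ℕ} (hcard : Fintype.card F = r ^ 2)
    (hσ : ∀ x, σ x = x ^ r) (hs : B.IsSymm) (hc : B c c = 0) (hcy : B c y ≠ 0) :
    {a : F | B (y + a • c) (y + a • c) = 0}.ncard = r := by
  classical
  have hyc : B y c ≠ 0 := fun h ↦ hcy (hs.isRefl y c h)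
  have hBt : ∀ a, B (y + a • c) (y + a • c) = B y y + (σ (a * B y c) + a * B y c) := fun a ↦ by
    simp [hc, hs.eq y c]
    ring
  have hpre : {a : F | B (y + a • c) (y + a • c) = 0} =
      (· * B y c) ⁻¹' ({t | σ t + t = -B y y} : Finset F) := by
    ext a
    rw [Set.mem_ofPred_eq, hBt, add_eq_zero_iff_neg_eq, eq_comm]
    simp
  rw [hpre, Set.ncard_preimage_of_injective_subset_range (mul_left_injective₀ hyc)
    (by simp [(mul_right_surjective₀ hyc).range_eq]), Set.ncard_coe_finset]
  exact card_filter_map_add_eq hcard hσ (by rw [map_neg, hs.eq])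

variable [RingHomInvPair σ σ] [FiniteDimensional F V]

theorem exists_add_smul_mem_of_inf_eq (hB : B.SeparatingLeft) (hr : B.IsRefl)
    (hC : C.orthogonalBilin B = C) (hEC : E ⋖ C) (hc : c ∈ C) (hcE : c ∉ E)
    (hy : y ∈ E.orthogonalBilin B) (hD : D.orthogonalBilin B = D) (hCD : C ⊓ D = E) :
    ∃ a : F, y + a • c ∈ D := by
  rw [← hCD, polar_inf antitone_orthogonalBilin (involutive_orthogonalBilin hB hr), hC, hD,
    ← span_singleton_sup_eq_of_covBy hEC hc hcE, sup_assoc,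
    sup_eq_right.2 (hCD.ge.trans inf_le_right), Submodule.mem_sup] at hy
  obtain ⟨x, hx, d, hd, rfl⟩ := hy
  obtain ⟨b, rfl⟩ := mem_span_singleton.1 hx
  exact ⟨-b, by simpa using hd⟩

theorem setOf_inf_eq_eq_image (hB : B.SeparatingLeft) (hr : B.IsRefl)
    (hC : C.orthogonalBilin B = C) (hEC : E ⋖ C) (hc : c ∈ C) (hcE : c ∉ E)
    (hy : y ∈ E.orthogonalBilin B) (hyC : y ∉ C) :
    {D | D.orthogonalBilin B = D ∧ C ⊓ D = E} =
      (fun a : F ↦ polarNeighbor (orthogonalBilin B) C (F ∙ (y + a • c))) ''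
        {a | B (y + a • c) (y + a • c) = 0} := by
  have hanti := antitone_orthogonalBilin (B := B)
  have hinv := involutive_orthogonalBilin hB hr
  have hzC : ∀ a : F, ¬ F ∙ (y + a • c) ≤ C := fun a h ↦
    hyC ((C.add_mem_iff_left (C.smul_mem a hc)).1 ((span_singleton_le_iff_mem _ C).1 h))
  have hzE : ∀ a : F, F ∙ (y + a • c) ≤ E.orthogonalBilin B := fun a ↦
    (span_singleton_le_iff_mem _ _).2 (add_mem hy (smul_mem _ a (hanti hEC.le (hC.ge hc))))
  ext D
  constructor
  · rintro ⟨hD, hCD⟩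
    obtain ⟨a, ha⟩ := exists_add_smul_mem_of_inf_eq hB hr hC hEC hc hcE hy hD hCD
    have hle : F ∙ (y + a • c) ≤ D := (span_singleton_le_iff_mem _ D).2 ha
    exact ⟨a, span_singleton_le_orthogonalBilin_iff.1 (le_orthogonalBilin_of_le hD hle),
      (eq_polarNeighbor hanti hinv hC hD (hCD ▸ hEC) hle (hzC a)).symm⟩
  · rintro ⟨a, ha, rfl⟩
    have hU := span_singleton_le_orthogonalBilin_iff.2 ha
    exact ⟨polar_polarNeighbor hanti hinv hC hU,
      (inf_polarNeighbor hU).trans (inf_polar_eq_of_covBy hanti hinv hC hEC (hzE a) (hzC a))⟩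

variable [Fintype F] {r : ℕ}

theorem ncard_inf_eq_of_covBy (hcard : Fintype.card F = r ^ 2) (hσ : ∀ x, σ x = x ^ r)
    (hB : B.SeparatingLeft) (hs : B.IsSymm) (hC : C.orthogonalBilin B = C) (hEC : E ⋖ C) :
    {D | D.orthogonalBilin B = D ∧ C ⊓ D = E}.ncard = r := by
  have hinv := involutive_orthogonalBilin hB hs.isRefl
  obtain ⟨c, hc, hcE⟩ := SetLike.exists_of_lt hEC.lt
  have hlt : C < E.orthogonalBilin B := hC.ge.trans_lt
    (antitone_orthogonalBilin.strictAnti_of_injective hinv.injective hEC.lt)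
  obtain ⟨y, hy, hyC⟩ := SetLike.exists_of_lt hlt
  have hiso : ∀ x ∈ C, B x c = 0 := mem_orthogonalBilin_iff.1 (hC.ge hc)
  have hcy : B c y ≠ 0 := fun h ↦ hyC <| by
    rw [← hC, ← span_singleton_sup_eq_of_covBy hEC hc hcE, polar_sup antitone_orthogonalBilin hinv]
    exact ⟨mem_orthogonalBilin_span_singleton.2 h, hy⟩
  have himage := setOf_inf_eq_eq_image hB hs.isRefl hC hEC hc hcE hy hyC
  rw [himage, Set.InjOn.ncard_image, ncard_isotropic_add_smul hcard hσ hs (hiso c hc) hcy]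
  intro a ha a' _ h
  have hmem : ∀ a : F, y + a • c ∈ polarNeighbor (orthogonalBilin B) C (F ∙ (y + a • c)) :=
    fun a ↦ mem_sup_right (mem_span_singleton_self _)
  have hinf := (himage.ge ⟨a, ha, rfl⟩).2
  exact eq_of_add_smul_mem_of_inf_eq hinf hc hcE (hmem a) (h ▸ hmem a')

theorem ncard_covBy_inf_eq_mul (hcard : Fintype.card F = r ^ 2) (hσ : ∀ x, σ x = x ^ r)
    (hB : B.SeparatingLeft) (hs : B.IsSymm) (hC : C.orthogonalBilin B = C) (hUC : U ≤ C) :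
    {D | D.orthogonalBilin B = D ∧ C ⊓ D ⋖ C ∧ U ≤ D}.ncard =
      {E | U ≤ E ∧ E ⋖ C}.ncard * r := by
  classical
  have : Finite V := Module.finite_of_finite F
  have : Fintype (Submodule F V) := Fintype.ofFinite _
  simp only [Set.ncard_eq_toFinset_card']
  rw [Finset.card_eq_sum_card_fiberwise (f := (C ⊓ ·)) (t := {E | U ≤ E ∧ E ⋖ C}.toFinset)]
  · refine Finset.sum_const_nat fun E hE ↦ ?_
    rw [Set.mem_toFinset] at hE
    rw [← ncard_inf_eq_of_covBy hcard hσ hB hs hC hE.2, Set.ncard_eq_toFinset_card']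
    congr 1
    ext D
    suffices C ⊓ D = E → C ⊓ D ⋖ C ∧ U ≤ D by simpa using by tauto
    rintro rfl
    exact ⟨hE.2, hE.1.trans inf_le_right⟩
  · intro D hD
    have hD : D.orthogonalBilin B = D ∧ C ⊓ D ⋖ C ∧ U ≤ D := by simpa using hD
    simpa using ⟨⟨hUC, hD.2.2⟩, hD.2.1⟩

end HermitianSpace

section Eigenvalue

/-- The eigenvalue `ν_m` of the Kneser-Hecke operator on Hermitian self-dual codes of dimension
`n` over a field with `q = r ^ 2` elements. The exponent `n - m` is truncated for `n < m`. -/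
def hermitianEigenvalue (q r n m : ℕ) : ℂ :=
  ((r : ℂ) * (q : ℂ) ^ (n - m) - (q : ℂ) ^ m - (r : ℂ) + 1) / ((q : ℂ) - 1)

theorem star_hermitianEigenvalue (q r n m : ℕ) :
    starRingEnd ℂ (hermitianEigenvalue q r n m) = hermitianEigenvalue q r n m := by
  simp [hermitianEigenvalue]

theorem natCast_sub_one_ne_zero {q : ℕ} (hq : 1 < q) : (q : ℂ) - 1 ≠ 0 :=
  sub_ne_zero.2 (by exact_mod_cast hq.ne')

theorem hermitianEigenvalue_injective {q : ℕ} (hq : 1 < q) (r n : ℕ) :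
    Function.Injective (hermitianEigenvalue q r n) := by
  have hmono : StrictMono fun m ↦ (q : ℤ) ^ m - r * q ^ (n - m) := fun i j hij ↦ by
    have hlt : (q : ℤ) ^ i < q ^ j := pow_lt_pow_right₀ (by exact_mod_cast hq) hij
    have hle : (q : ℤ) ^ (n - j) ≤ q ^ (n - i) :=
      pow_le_pow_right₀ (by exact_mod_cast hq.le) (by omega)
    have := mul_le_mul_of_nonneg_left hle (Int.natCast_nonneg r)
    dsimp only
    linarith
  intro i j hij
  have h := (div_left_inj' (natCast_sub_one_ne_zero hq)).1 hij
  have h' : (q : ℂ) ^ i - r * q ^ (n - i) = q ^ j - r * q ^ (n - j) := by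
    linear_combination -h
  exact hmono.injective (by exact_mod_cast h')

end Eigenvalue

section NeighborCount

open Module Submodule

variable {F V : Type*} [Field F] [Fintype F] [AddCommGroup V] [Module F V]
  [FiniteDimensional F V] {r : ℕ} {σ : F →+* F} [RingHomInvPair σ σ]
  {B : V →ₛₗ[σ] V →ₗ[F] F} {C U : Submodule F V}

theorem ncard_neighbors_of_le (hcard : Fintype.card F = r ^ 2) (hσ : ∀ x, σ x = x ^ r)
    (hB : B.SeparatingLeft) (hs : B.IsSymm) (hC : C.orthogonalBilin B = C) (hUC : U ≤ C) :
    ({D | D.orthogonalBilin B = D ∧ C ⊓ D ⋖ C ∧ U ≤ D}.ncard : ℂ) =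
      hermitianEigenvalue (Fintype.card F) r (finrank F C) (finrank F U) +
        ({H | H ⋖ U ∧ H ≤ C}.ncard : ℂ) := by
  have hq := natCast_sub_one_ne_zero (Fintype.one_lt_card (α := F))
  have hcount : ∀ {A W : Submodule F V}, A ≤ W → ({E | A ≤ E ∧ E ⋖ W}.ncard : ℂ) *
      ((Fintype.card F : ℂ) - 1) + 1 = (Fintype.card F : ℂ) ^ (finrank F W - finrank F A) :=
    fun h ↦ by
      have := ncard_le_covBy_mul_add_one (K := F) h
      rw [Nat.card_eq_fintype_card] at this
      rw [← Nat.cast_one, ← Nat.cast_sub Fintype.card_pos]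
      exact_mod_cast this
  have hbelow : {H | H ⋖ U ∧ H ≤ C} = {H | ⊥ ≤ H ∧ H ⋖ U} := by
    ext H
    exact ⟨fun h ↦ ⟨bot_le, h.1⟩, fun h ↦ ⟨h.2, h.2.le.trans hUC⟩⟩
  have hE := hcount hUC
  have hH := hcount (bot_le : ⊥ ≤ U)
  rw [finrank_bot, Nat.sub_zero] at hH
  rw [ncard_covBy_inf_eq_mul hcard hσ hB hs hC hUC, hbelow, hermitianEigenvalue, ← hE, ← hH]
  field_simp
  push_cast
  ring

theorem ncard_neighbors_eq (hcard : Fintype.card F = r ^ 2) (hσ : ∀ x, σ x = x ^ r)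
    (hB : B.SeparatingLeft) (hs : B.IsSymm) (hC : C.orthogonalBilin B = C)
    (hU : U ≤ U.orthogonalBilin B) [Decidable (U ≤ C)] :
    ({D | D.orthogonalBilin B = D ∧ C ⊓ D ⋖ C ∧ U ≤ D}.ncard : ℂ) =
      hermitianEigenvalue (Fintype.card F) r (finrank F C) (finrank F U) *
        (if U ≤ C then 1 else 0) + ({H | H ⋖ U ∧ H ≤ C}.ncard : ℂ) := by
  split_ifs with hUC
  · rw [ncard_neighbors_of_le hcard hσ hB hs hC hUC, mul_one]
  · rw [ncard_neighbors_of_not_le antitone_orthogonalBilin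
      (involutive_orthogonalBilin hB hs.isRefl) hC hU hUC, mul_zero, zero_add]

end NeighborCount

section Permutations

variable {F : Type} [Field F] {N : ℕ} {C D : Submodule F (Fin N → F)}

theorem mem_permCode {π : Equiv.Perm (Fin N)} {x : Fin N → F} :
    x ∈ permCode π C ↔ x ∘ π.symm ∈ C := by
  constructor
  · rintro ⟨y, hy, rfl⟩
    simpa [LinearMap.funLeft, Function.comp_assoc] using hy
  · exact fun hx ↦ ⟨x ∘ π.symm, hx, by ext; simp [LinearMap.funLeft_apply]⟩

theorem permCode_one (C : Submodule F (Fin N → F)) : permCode 1 C = C := by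
  ext x
  exact mem_permCode

theorem permCode_permCode (π τ : Equiv.Perm (Fin N)) (C : Submodule F (Fin N → F)) :
    permCode π (permCode τ C) = permCode (τ * π) C := by
  ext x
  simp only [mem_permCode]
  rfl

theorem permCode_eq_iff {π : Equiv.Perm (Fin N)} : permCode π C = D ↔ C = permCode π⁻¹ D := by
  constructor <;> rintro rfl <;> simp [permCode_permCode, permCode_one]

theorem permCode_bijective (π : Equiv.Perm (Fin N)) :
    Function.Bijective (permCode (F := F) π) :=
  Function.bijective_iff_has_inverse.2
    ⟨permCode π⁻¹, fun _ ↦ (permCode_eq_iff.1 rfl).symm, fun _ ↦ permCode_eq_iff.2 rfl⟩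

theorem permCode_le_iff {π : Equiv.Perm (Fin N)} : permCode π C ≤ D ↔ C ≤ permCode π⁻¹ D := by
  have hcomap : C ≤ permCode π⁻¹ D ↔ ∀ x ∈ C, x ∘ π ∈ D := forall₂_congr fun _ _ ↦ mem_permCode
  exact Submodule.map_le_iff_le_comap.trans hcomap.symm

theorem finrank_permCode_inf_permCode (π : Equiv.Perm (Fin N)) (C D : Submodule F (Fin N → F)) :
    Module.finrank F ↥(permCode π C ⊓ permCode π D) = Module.finrank F ↥(C ⊓ D) := by
  have hmap : permCode π C ⊓ permCode π D = permCode π (C ⊓ D) := by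
    ext x
    simp only [Submodule.mem_inf, mem_permCode]
  rw [hmap]
  exact LinearEquiv.finrank_map_eq (LinearEquiv.funCongrLeft F F π) (C ⊓ D)

theorem equivalence_equivCode : Equivalence (equivCode (F := F) (N := N)) where
  refl C := ⟨1, permCode_one C⟩
  symm := fun ⟨π, hπ⟩ ↦ ⟨π⁻¹, (permCode_eq_iff.1 hπ).symm⟩
  trans := fun ⟨π, hπ⟩ ⟨τ, hτ⟩ ↦ ⟨π * τ, by rw [← permCode_permCode, hπ, hτ]⟩

theorem autCard_ne_zero (C : Submodule F (Fin N → F)) : (autCard C : ℂ) ≠ 0 := by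
  have : Nonempty {π : Equiv.Perm (Fin N) // permCode π C = C} := ⟨⟨1, permCode_one C⟩⟩
  exact_mod_cast (Nat.card_pos (α := {π : Equiv.Perm (Fin N) // permCode π C = C})).ne'

variable {𝓕 : Set (Submodule F (Fin N → F))}

theorem clsOf_eq_clsOf_iff {C D : 𝓕} : clsOf C = clsOf D ↔ equivCode C.1 D.1 :=
  Quot.eq.trans (Equivalence.eqvGen_iff (equivalence_equivCode.comap Subtype.val))

theorem clsOf_repB (b : ClassesB 𝓕) : clsOf (repB b) = b :=
  Quot.out_eq b

/-- A family of codes that is closed under coordinate permutations. -/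
def PermInvariant (𝓕 : Set (Submodule F (Fin N → F))) : Prop :=
  ∀ π : Equiv.Perm (Fin N), ∀ C ∈ 𝓕, permCode π C ∈ 𝓕

end Permutations

section Monomials

open Module Submodule

variable {F : Type} {N m : ℕ}

theorem exists_perm_comp_eq_of_mon_eq {c d : Fin m → Fin N → F} (h : mon c = mon d) :
    ∃ π : Equiv.Perm (Fin N), ∀ j, d j ∘ π = c j := by
  have hfiber : ∀ v : Fin m → F, Nonempty ({i // (c · i) = v} ≃ {i // (d · i) = v}) := fun v ↦
    Finite.card_eq.1 (by simpa only [mon, funext_iff] using congrFun h v)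
  exact ⟨Equiv.ofFiberEquiv fun v ↦ (hfiber v).some, fun j ↦ funext fun i ↦
    congrFun (Equiv.ofFiberEquiv_map (fun v ↦ (hfiber v).some) i) j⟩

theorem mon_mem_MmSet [Fintype F] (c : Fin m → Fin N → F) : mon c ∈ MmSet F m N := by
  have h := Nat.card_congr (Equiv.sigmaFiberEquiv fun (i : Fin N) (j : Fin m) ↦ c j i)
  rw [Nat.card_sigma, Nat.card_fin] at h
  simpa only [MmSet, Set.mem_ofPred_eq, mon, ← funext_iff] using h

theorem mon_comp (c : Fin m → Fin N → F) (π : Equiv.Perm (Fin N)) :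
    mon (fun j ↦ c j ∘ π) = mon c :=
  funext fun _ ↦ Nat.card_congr (π.subtypeEquiv fun _ ↦ Iff.rfl)

variable [Field F]

theorem aX_permCode (X : (Fin m → F) → ℕ) (π : Equiv.Perm (Fin N))
    (C : Submodule F (Fin N → F)) : aX X (permCode π C) = aX X C := by
  refine Nat.card_congr ((Equiv.piCongrRight fun _ ↦ π.arrowCongr (Equiv.refl F)).subtypeEquiv
    fun c ↦ and_congr (forall_congr' fun j ↦ mem_permCode) ?_)
  exact iff_of_eq (congrArg (· = X) (mon_comp c π.symm).symm)

theorem span_range_comp_perm (c : Fin m → Fin N → F) (π : Equiv.Perm (Fin N)) :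
    span F (Set.range fun j ↦ c j ∘ π) = permCode π (span F (Set.range c)) := by
  rw [permCode, Submodule.map_span, ← Set.range_comp]
  rfl

theorem exists_span_range_eq_of_finrank_le {K V : Type*} [Field K] [AddCommGroup V] [Module K V]
    (U : Submodule K V) [FiniteDimensional K U] {m : ℕ} (hU : finrank K U ≤ m) :
    ∃ c : Fin m → V, span K (Set.range c) = U := by
  let b := finBasis K U
  refine ⟨Function.extend (Fin.castLE hU) (fun i ↦ (b i : V)) 0, ?_⟩
  have hzero : span K ((0 : Fin m → V) '' (Set.range (Fin.castLE hU))ᶜ) = ⊥ :=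
    span_eq_bot.2 fun x ⟨_, _, hx⟩ ↦ hx.symm
  rw [Set.range_extend (Fin.castLE_injective hU), span_union, hzero, sup_bot_eq,
    Set.range_comp' _ b, ← U.coe_subtype, span_image, b.span_eq, map_subtype_top]

end Monomials

local instance fintypeCode {F : Type} [Field F] [Fintype F] {N : ℕ} :
    Fintype (Submodule F (Fin N → F)) :=
  Fintype.ofFinite _

local instance fintypeClassesB {F : Type} [Field F] [Fintype F] {N : ℕ}
    {𝓕 : Set (Submodule F (Fin N → F))} : Fintype (ClassesB 𝓕) :=
  Fintype.ofFinite _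

section ClassSpace

open scoped Classical
open Finset

variable {F : Type} [Field F] [Fintype F] {N : ℕ} {𝓕 : Set (Submodule F (Fin N → F))}

/-- The embedding of `V` into the space spanned by all codes which sends a class `[C]` to
`∑ π, π(C)`, the sum over all coordinate permutations. -/
def orbitSum (𝓕 : Set (Submodule F (Fin N → F))) :
    (ClassesB 𝓕 → ℂ) →ₗ[ℂ] Submodule F (Fin N → F) → ℂ :=
  Fintype.linearCombination ℂ fun b ↦ ∑ π, Pi.single (permCode π (repB b).1) 1

theorem orbitSum_apply (v : ClassesB 𝓕 → ℂ) (C : Submodule F (Fin N → F)) :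
    orbitSum 𝓕 v C = ∑ b, v b * ∑ π, if permCode π (repB b).1 = C then 1 else 0 := by
  simp [orbitSum, Fintype.linearCombination_apply, Pi.single_apply, eq_comm]

theorem sum_orbitSum_mul (v : ClassesB 𝓕 → ℂ) (φ : Submodule F (Fin N → F) → ℂ) :
    ∑ C, orbitSum 𝓕 v C * φ C = ∑ b, v b * ∑ π, φ (permCode π (repB b).1) := by
  simp only [orbitSum_apply, mul_sum, sum_mul]
  rw [sum_comm]
  refine sum_congr rfl fun b _ ↦ ?_
  rw [sum_comm]
  simp

theorem orbitSum_permCode (v : ClassesB 𝓕 → ℂ) (τ : Equiv.Perm (Fin N))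
    (C : Submodule F (Fin N → F)) : orbitSum 𝓕 v (permCode τ C) = orbitSum 𝓕 v C := by
  simp only [orbitSum_apply]
  refine sum_congr rfl fun b _ ↦ congrArg (v b * ·) ?_
  refine Fintype.sum_equiv (Equiv.mulRight τ⁻¹) _ _ fun π ↦ ?_
  simp only [Equiv.coe_mulRight, ← permCode_permCode, permCode_eq_iff (π := τ⁻¹), inv_inv]

theorem orbitSum_repB (v : ClassesB 𝓕 → ℂ) (b : ClassesB 𝓕) :
    orbitSum 𝓕 v (repB b).1 = v b * autCard (repB b).1 := by
  have hne : ∀ b' ≠ b, ∀ π, permCode π (repB b').1 ≠ (repB b).1 := fun b' hb' π hπ ↦ hb' <| by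
    rw [← clsOf_repB b', ← clsOf_repB b]
    exact clsOf_eq_clsOf_iff.2 ⟨π, hπ⟩
  rw [orbitSum_apply, sum_eq_single b (fun b' _ hb' ↦ by simp [hne b' hb']) (by simp)]
  simp [autCard, Fintype.card_subtype]

theorem orbitSum_injective : Function.Injective (orbitSum 𝓕) := by
  refine (injective_iff_map_eq_zero _).2 fun v hv ↦ funext fun b ↦ ?_
  have h := orbitSum_repB v b
  rw [hv, Pi.zero_apply, eq_comm, mul_eq_zero] at h
  exact h.resolve_right (autCard_ne_zero _)

theorem orbitSum_eq_zero_of_notMem (h𝓕 : PermInvariant 𝓕) (v : ClassesB 𝓕 → ℂ)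
    {C : Submodule F (Fin N → F)} (hC : C ∉ 𝓕) : orbitSum 𝓕 v C = 0 := by
  have hne : ∀ b : ClassesB 𝓕, ∀ π, permCode π (repB b).1 ≠ C := fun b π hπ ↦
    hC (hπ ▸ h𝓕 π _ (repB b).2)
  simp [orbitSum_apply, hne]

theorem factorial_mul_innerV (w v : ClassesB 𝓕 → ℂ) :
    (N.factorial : ℂ) * innerV 𝓕 w v =
      ∑ C, starRingEnd ℂ (orbitSum 𝓕 w C) * orbitSum 𝓕 v C := by
  simp only [mul_comm (starRingEnd ℂ _), sum_orbitSum_mul, orbitSum_permCode, orbitSum_repB]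
  rw [innerV, mul_sum]
  refine sum_congr rfl fun b _ ↦ ?_
  simp [Fintype.card_perm]
  ring

theorem orbitSum_single_clsOf (C : 𝓕) (D : Submodule F (Fin N → F)) :
    orbitSum 𝓕 (Pi.single (clsOf C) 1) D = ∑ π, if permCode π C.1 = D then 1 else 0 := by
  obtain ⟨τ, hτ⟩ : equivCode (repB (clsOf C)).1 C.1 := clsOf_eq_clsOf_iff.1 (clsOf_repB _)
  rw [orbitSum_apply, sum_eq_single (clsOf C) (fun b _ hb ↦ by simp [hb]) (by simp),
    Pi.single_eq_same, one_mul, ← hτ]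
  refine Fintype.sum_equiv (Equiv.mulLeft τ⁻¹) _ _ fun π ↦ ?_
  simp [permCode_permCode]

theorem heckeT_eq_sum (n k : ℕ) (v : ClassesB 𝓕 → ℂ) :
    heckeT 𝓕 n k v = ∑ b, v b • ∑ C : 𝓕,
      if Module.finrank F ↥((repB b).1 ⊓ C.1) + k = n then Pi.single (clsOf C) 1 else 0 := by
  ext b'
  rw [heckeT, Finset.sum_apply]
  refine sum_congr rfl fun b _ ↦ ?_
  rw [Pi.smul_apply, smul_eq_mul, Finset.sum_apply, Nat.card_eq_fintype_card, Fintype.card_subtype,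
    card_filter]
  push_cast
  refine congrArg (v b * ·) (sum_congr rfl fun C _ ↦ ?_)
  split_ifs <;> simp_all

theorem orbitSum_heckeT (h𝓕 : PermInvariant 𝓕) (n k : ℕ) (v : ClassesB 𝓕 → ℂ)
    (D : Submodule F (Fin N → F)) :
    orbitSum 𝓕 (heckeT 𝓕 n k v) D = ∑ C, orbitSum 𝓕 v C *
      if D ∈ 𝓕 ∧ Module.finrank F ↥(C ⊓ D) + k = n then 1 else 0 := by
  have hpull : ∀ b : ClassesB 𝓕, ∀ π, (∑ C : 𝓕,
      if Module.finrank F ↥((repB b).1 ⊓ C.1) + k = n then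
        (if permCode π C.1 = D then (1 : ℂ) else 0) else 0) =
      if D ∈ 𝓕 ∧ Module.finrank F ↥(permCode π (repB b).1 ⊓ D) + k = n then 1 else 0 := by
    intro b π
    by_cases hD : D ∈ 𝓕
    · have hD' : permCode π⁻¹ D ∈ 𝓕 := h𝓕 _ _ hD
      rw [sum_eq_single ⟨_, hD'⟩ (fun C _ hC ↦ ?_) (by simp)]
      · have h := finrank_permCode_inf_permCode π (repB b).1 (permCode π⁻¹ D)
        rw [permCode_eq_iff.2 rfl] at h
        simp [hD, h, permCode_eq_iff]
      · simp [permCode_eq_iff, Subtype.ext_iff.not.1 hC]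
    · have hne : ∀ C : 𝓕, permCode π C.1 ≠ D := fun C h ↦ hD (h ▸ h𝓕 π _ C.2)
      simp [hD, hne]
  rw [sum_orbitSum_mul, heckeT_eq_sum, map_sum, Finset.sum_apply]
  refine sum_congr rfl fun b _ ↦ ?_
  simp only [map_smul, map_sum, Pi.smul_apply, Finset.sum_apply, smul_eq_mul, ← hpull]
  rw [sum_comm]
  refine congrArg (v b * ·) (sum_congr rfl fun C _ ↦ ?_)
  split_ifs <;> simp [orbitSum_single_clsOf]

/-- The operator `T_k` on `V` as a linear map. -/
def heckeEnd (𝓕 : Set (Submodule F (Fin N → F))) (n k : ℕ) : Module.End ℂ (ClassesB 𝓕 → ℂ) where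
  toFun := heckeT 𝓕 n k
  map_add' v w := by simp [heckeT_eq_sum, add_smul, sum_add_distrib]
  map_smul' a v := by simp [heckeT_eq_sum, mul_smul, smul_sum]

theorem heckeEnd_apply (n k : ℕ) (v : ClassesB 𝓕 → ℂ) : heckeEnd 𝓕 n k v = heckeT 𝓕 n k v :=
  rfl

/-- The inner product of `V` as a sesquilinear form, conjugate-linear in the first argument. -/
def innerForm (𝓕 : Set (Submodule F (Fin N → F))) :
    (ClassesB 𝓕 → ℂ) →ₗ⋆[ℂ] (ClassesB 𝓕 → ℂ) →ₗ[ℂ] ℂ :=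
  LinearMap.mk₂'ₛₗ _ _ (innerV 𝓕)
    (fun v v' w ↦ by simp [innerV, add_mul, sum_add_distrib])
    (fun a v w ↦ by simp [innerV, mul_assoc, mul_sum])
    (fun v w w' ↦ by simp [innerV, mul_add, add_mul, sum_add_distrib])
    (fun a v w ↦ by simp [innerV, mul_left_comm, mul_assoc, mul_sum])

theorem innerForm_isSymm (𝓕 : Set (Submodule F (Fin N → F))) : (innerForm 𝓕).IsSymm :=
  ⟨fun v w ↦ by
    change starRingEnd ℂ (innerV 𝓕 v w) = innerV 𝓕 w v
    simp [innerV, mul_comm]⟩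

theorem eq_zero_of_innerForm_self_eq_zero {v : ClassesB 𝓕 → ℂ} (h : innerForm 𝓕 v v = 0) :
    v = 0 := by
  have hsum : ((∑ C, Complex.normSq (orbitSum 𝓕 v C) : ℝ) : ℂ) = 0 := by
    push_cast
    simp only [Complex.normSq_eq_conj_mul_self, ← factorial_mul_innerV]
    exact mul_eq_zero_of_right _ h
  have hzero := (sum_eq_zero_iff_of_nonneg fun C _ ↦ Complex.normSq_nonneg _).1
    (Complex.ofReal_eq_zero.1 hsum)
  refine orbitSum_injective ((funext fun C ↦ ?_).trans (map_zero (orbitSum 𝓕)).symm)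
  exact Complex.normSq_eq_zero.1 (hzero C (mem_univ C))

theorem innerForm_heckeEnd (h𝓕 : PermInvariant 𝓕) (n k : ℕ) (w v : ClassesB 𝓕 → ℂ) :
    innerForm 𝓕 (heckeEnd 𝓕 n k w) v = innerForm 𝓕 w (heckeEnd 𝓕 n k v) := by
  refine mul_left_cancel₀ (Nat.cast_ne_zero.2 N.factorial_ne_zero : (N.factorial : ℂ) ≠ 0) ?_
  change _ * innerV 𝓕 (heckeT 𝓕 n k w) v = _ * innerV 𝓕 w (heckeT 𝓕 n k v)
  simp only [factorial_mul_innerV, orbitSum_heckeT h𝓕, map_sum, map_mul, sum_mul, mul_sum]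
  rw [sum_comm]
  refine sum_congr rfl fun C _ ↦ sum_congr rfl fun D _ ↦ ?_
  by_cases hC : C ∈ 𝓕
  · by_cases hD : D ∈ 𝓕
    · have hcomm : Module.finrank F ↥(D ⊓ C) = Module.finrank F ↥(C ⊓ D) := by rw [inf_comm]
      simp only [hC, hD, true_and, hcomm]
      split_ifs <;> simp
    · simp [orbitSum_eq_zero_of_notMem h𝓕 v hD, hD]
  · simp [orbitSum_eq_zero_of_notMem h𝓕 w hC, hC]

end ClassSpace

section Genus

open scoped Classical
open Finset Module Submodule

variable {F : Type} [Field F] [Fintype F] {N : ℕ} {𝓕 : Set (Submodule F (Fin N → F))}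

/-- The linear functional on `V` which sends a class `[C]` to the number of coordinate
permutations `π` such that `U ≤ π(C)`. -/
def supersetSum (𝓕 : Set (Submodule F (Fin N → F))) (U : Submodule F (Fin N → F)) :
    (ClassesB 𝓕 → ℂ) →ₗ[ℂ] ℂ :=
  ∑ C with U ≤ C, LinearMap.proj C ∘ₗ orbitSum 𝓕

theorem supersetSum_apply (U : Submodule F (Fin N → F)) (v : ClassesB 𝓕 → ℂ) :
    supersetSum 𝓕 U v = ∑ C, orbitSum 𝓕 v C * if U ≤ C then 1 else 0 := by
  simp only [supersetSum, sum_filter, LinearMap.sum_apply]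
  refine sum_congr rfl fun C _ ↦ ?_
  split_ifs <;> simp

theorem supersetSum_permCode (π : Equiv.Perm (Fin N)) (U : Submodule F (Fin N → F))
    (v : ClassesB 𝓕 → ℂ) : supersetSum 𝓕 (permCode π U) v = supersetSum 𝓕 U v := by
  simp only [supersetSum_apply]
  refine Eq.trans (sum_congr rfl fun C _ ↦ ?_) ((permCode_bijective π⁻¹).sum_comp _)
  rw [permCode_le_iff, orbitSum_permCode]

theorem supersetSum_eq_zero {𝓕 : Set (Submodule F (Fin N → F))} (h𝓕 : PermInvariant 𝓕)
    {U : Submodule F (Fin N → F)} (hU : ∀ C ∈ 𝓕, ¬U ≤ C) (v : ClassesB 𝓕 → ℂ) :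
    supersetSum 𝓕 U v = 0 := by
  rw [supersetSum_apply]
  refine sum_eq_zero fun C _ ↦ ?_
  by_cases hC : C ∈ 𝓕
  · simp [hU C hC]
  · simp [orbitSum_eq_zero_of_notMem h𝓕 v hC]

theorem factorial_mul_aXc {m : ℕ} (X : (Fin m → F) → ℕ) (v : ClassesB 𝓕 → ℂ) :
    (N.factorial : ℂ) * aXc 𝓕 X v =
      ∑ c : Fin m → Fin N → F with mon c = X, supersetSum 𝓕 (span F (Set.range c)) v := by
  have hcount : ∀ C, (aX X C : ℂ) =
      ∑ c : Fin m → Fin N → F with mon c = X, if span F (Set.range c) ≤ C then 1 else 0 := by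
    intro C
    simp [aX, Fintype.card_subtype, span_le, Set.range_subset_iff, filter_filter, and_comm]
  calc (N.factorial : ℂ) * aXc 𝓕 X v
      = ∑ b, v b * ∑ π, (aX X (permCode π (repB b).1) : ℂ) := by
        simp [aXc, aX_permCode, mul_sum, Fintype.card_perm, mul_left_comm]
    _ = ∑ C, orbitSum 𝓕 v C * aX X C := (sum_orbitSum_mul v fun C ↦ (aX X C : ℂ)).symm
    _ = _ := by
        simp only [hcount, mul_sum, supersetSum_apply]
        exact sum_comm

/-- The subspace `V_{m-1}`, described by the codes of dimension less than `m` in place of the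
monomials of genus `m - 1`. -/
def genusFiltration (𝓕 : Set (Submodule F (Fin N → F))) (m : ℕ) :
    Submodule ℂ (ClassesB 𝓕 → ℂ) :=
  ⨅ (U : Submodule F (Fin N → F)) (_ : finrank F U < m), LinearMap.ker (supersetSum 𝓕 U)

theorem mem_genusFiltration {m : ℕ} {v : ClassesB 𝓕 → ℂ} :
    v ∈ genusFiltration 𝓕 m ↔
      ∀ U : Submodule F (Fin N → F), finrank F U < m → supersetSum 𝓕 U v = 0 := by
  simp [genusFiltration]

theorem genusFiltration_antitone : Antitone (genusFiltration 𝓕) := fun _ _ h _ hv ↦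
  mem_genusFiltration.2 fun U hU ↦ mem_genusFiltration.1 hv U (hU.trans_le h)

theorem genusFiltration_zero : genusFiltration 𝓕 0 = ⊤ := by
  simp [genusFiltration]

theorem genusFiltration_eq_bot {n : ℕ} (h𝓕 : PermInvariant 𝓕)
    (hdim : ∀ C ∈ 𝓕, finrank F C = n) : genusFiltration 𝓕 (n + 1) = ⊥ := by
  refine (Submodule.eq_bot_iff _).2 fun v hv ↦ orbitSum_injective ?_
  refine (funext fun C ↦ ?_ : orbitSum 𝓕 v = 0).trans (map_zero (orbitSum 𝓕)).symm
  by_cases hC : C ∈ 𝓕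
  · have hsup := mem_genusFiltration.1 hv C (by rw [hdim C hC]; exact n.lt_succ_self)
    rw [supersetSum_apply, sum_eq_single C (fun D _ hD ↦ ?_) (by simp)] at hsup
    · simpa using hsup
    · by_cases hD𝓕 : D ∈ 𝓕
      · have hnle : ¬C ≤ D := fun hCD ↦
          hD (eq_of_le_of_finrank_eq hCD ((hdim C hC).trans (hdim D hD𝓕).symm)).symm
        simp [hnle]
      · simp [orbitSum_eq_zero_of_notMem h𝓕 v hD𝓕]
  · exact orbitSum_eq_zero_of_notMem h𝓕 v hC

theorem VmSet_eq_genusFiltration (m : ℕ) :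
    VmSet 𝓕 m = (genusFiltration 𝓕 (m + 1) : Set (ClassesB 𝓕 → ℂ)) := by
  have hfact : (N.factorial : ℂ) ≠ 0 := Nat.cast_ne_zero.2 N.factorial_ne_zero
  ext v
  rw [SetLike.mem_coe, mem_genusFiltration]
  constructor
  · intro hv U hU
    obtain ⟨c, rfl⟩ := exists_span_range_eq_of_finrank_le U (Nat.lt_succ_iff.1 hU)
    have hconst : ∀ d ∈ univ.filter fun d : Fin m → Fin N → F ↦ mon d = mon c,
        supersetSum 𝓕 (span F (Set.range d)) v = supersetSum 𝓕 (span F (Set.range c)) v := by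
      intro d hd
      obtain ⟨π, hπ⟩ := exists_perm_comp_eq_of_mon_eq (mem_filter.1 hd).2
      rw [← funext hπ, span_range_comp_perm, supersetSum_permCode]
    have hsum := factorial_mul_aXc (mon c) v
    rw [hv _ (mon_mem_MmSet c), mul_zero, sum_congr rfl hconst, sum_const, eq_comm,
      smul_eq_zero] at hsum
    exact hsum.resolve_left (card_ne_zero_of_mem (mem_filter.2 ⟨mem_univ c, rfl⟩))
  · intro hv X _
    refine (mul_eq_zero.1 ((factorial_mul_aXc X v).trans ?_)).resolve_left hfact
    refine sum_eq_zero fun c _ ↦ hv _ (Nat.lt_succ_iff.2 ?_)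
    exact (finrank_range_le_card c).trans_eq (Fintype.card_fin m)

theorem VmPred_eq_genusFiltration (m : ℕ) :
    VmPred 𝓕 m = (genusFiltration 𝓕 m : Set (ClassesB 𝓕 → ℂ)) := by
  cases m with
  | zero => simp [VmPred, genusFiltration_zero]
  | succ m => exact VmSet_eq_genusFiltration m

theorem YmSet_eq_orthogonalBilin_inf (m : ℕ) :
    YmSet 𝓕 m = ↑((genusFiltration 𝓕 (m + 1)).orthogonalBilin (innerForm 𝓕) ⊓
      genusFiltration 𝓕 m) := by
  have hW : WmSet 𝓕 m = ((genusFiltration 𝓕 (m + 1)).orthogonalBilin (innerForm 𝓕) :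
      Set (ClassesB 𝓕 → ℂ)) := by
    ext w
    rw [WmSet, VmSet_eq_genusFiltration]
    exact forall₂_congr fun v _ ↦ (innerForm_isSymm 𝓕).eq_iff
  rw [YmSet, hW, VmPred_eq_genusFiltration, Submodule.coe_inf]

end Genus

section StandardForm

open Module Submodule

variable {F : Type*} [Field F] {σ : F →+* F} {ι : Type*} [Fintype ι]

/-- The form `b`, as a sesquilinear form: its first argument is the second argument of `b`, so that
it is semilinear in the first argument and `dualCode` becomes `Submodule.orthogonalBilin`. -/
def standardForm (σ : F →+* F) (ι : Type*) [Fintype ι] : (ι → F) →ₛₗ[σ] (ι → F) →ₗ[F] F :=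
  LinearMap.mk₂'ₛₗ σ (RingHom.id F) (fun y x ↦ ∑ i, x i * σ (y i))
    (fun y y' x ↦ by simp [mul_add, Finset.sum_add_distrib])
    (fun a y x ↦ by simp [Finset.mul_sum, mul_left_comm])
    (fun y x x' ↦ by simp [add_mul, Finset.sum_add_distrib])
    (fun a y x ↦ by simp [Finset.mul_sum, mul_assoc])

theorem standardForm_apply (y x : ι → F) : standardForm σ ι y x = ∑ i, x i * σ (y i) :=
  rfl

theorem standardForm_separatingLeft : (standardForm σ ι).SeparatingLeft := by
  classical
  refine fun y hy ↦ funext fun i ↦ (map_eq_zero σ).1 ?_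
  simpa [standardForm_apply, Pi.single_apply] using hy (Pi.single i 1)

theorem standardForm_isSymm [RingHomInvPair σ σ] : (standardForm σ ι).IsSymm :=
  ⟨fun y x ↦ by simp [standardForm_apply, mul_comm]⟩

theorem exists_ringHom_apply_eq_pow [Fintype F] {r k : ℕ} (hr : IsPrimePow r)
    (hcard : Fintype.card F = r ^ k) : ∃ σ : F →+* F, ∀ x, σ x = x ^ r := by
  obtain ⟨p, e, hp, -, rfl⟩ := hr
  have : Fact p.Prime := ⟨hp.nat_prime⟩
  have : CharP F p := charP_of_card_eq_prime_pow (f := e * k) (by rw [hcard, pow_mul])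
  exact ⟨iterateFrobenius F p e, fun _ ↦ rfl⟩

theorem ringHomInvPair_of_apply_eq_pow [Fintype F] {r : ℕ} (hcard : Fintype.card F = r ^ 2)
    (hσ : ∀ x, σ x = x ^ r) : RingHomInvPair σ σ := by
  have hcomp : σ.comp σ = RingHom.id F := RingHom.ext fun x ↦ by
    simp [hσ, ← pow_mul, ← pow_two, ← hcard, FiniteField.pow_card]
  exact ⟨hcomp, hcomp⟩

end StandardForm

section HermitianSelfDual

open scoped Classical
open Finset Module Submodule

variable {F : Type} [Field F] {σ : F →+* F} {N n : ℕ}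

/-- The self-dual codes for the form `∑ i, x i * σ (y i)`. -/
def selfDualCodes (σ : F →+* F) (N : ℕ) : Set (Submodule F (Fin N → F)) :=
  {C | C.orthogonalBilin (standardForm σ (Fin N)) = C}

theorem standardForm_comp_perm_left (π : Equiv.Perm (Fin N)) (x y : Fin N → F) :
    standardForm σ (Fin N) (y ∘ π) x = standardForm σ (Fin N) y (x ∘ π.symm) := by
  simpa [standardForm_apply] using Equiv.sum_comp π fun i ↦ x (π.symm i) * σ (y i)

theorem orthogonalBilin_permCode (π : Equiv.Perm (Fin N)) (C : Submodule F (Fin N → F)) :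
    (permCode π C).orthogonalBilin (standardForm σ (Fin N)) =
      permCode π (C.orthogonalBilin (standardForm σ (Fin N))) := by
  ext x
  rw [mem_permCode, mem_orthogonalBilin_iff, mem_orthogonalBilin_iff, permCode]
  refine Set.forall_mem_image.trans (forall₂_congr fun y _ ↦ ?_)
  exact iff_of_eq (congrArg (· = 0) (standardForm_comp_perm_left π x y))

theorem permInvariant_selfDualCodes : PermInvariant (selfDualCodes σ N) := fun π C hC ↦
  (orthogonalBilin_permCode π C).trans (congrArg (permCode π) hC)

variable [RingHomInvPair σ σ]

theorem finrank_eq_of_mem_selfDualCodes {C : Submodule F (Fin (2 * n) → F)}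
    (hC : C ∈ selfDualCodes σ (2 * n)) : finrank F C = n := by
  have h := finrank_add_finrank_orthogonalBilin (standardForm_separatingLeft (σ := σ)) C
  rw [show C.orthogonalBilin _ = C from hC, finrank_fin_fun] at h
  omega

variable [Fintype F] {r : ℕ}

theorem natCast_ncard_setOf {α : Type*} [Fintype α] (p : α → Prop) [DecidablePred p] :
    ({a | p a}.ncard : ℂ) = ∑ a, if p a then 1 else 0 := by
  rw [← Nat.card_coe_set_eq, Nat.card_eq_fintype_card, Fintype.card_subtype]
  simp

theorem sum_neighbors_eq (hcard : Fintype.card F = r ^ 2) (hσ : ∀ x, σ x = x ^ r)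
    {C U : Submodule F (Fin (2 * n) → F)} (hC : C ∈ selfDualCodes σ (2 * n))
    (hU : U ≤ U.orthogonalBilin (standardForm σ (Fin (2 * n)))) :
    (∑ D, if (D ∈ selfDualCodes σ (2 * n) ∧ finrank F ↥(C ⊓ D) + 1 = n) ∧ U ≤ D then
        (1 : ℂ) else 0) =
      hermitianEigenvalue (Fintype.card F) r n (finrank F U) * (if U ≤ C then 1 else 0) +
        ∑ H with H ⋖ U, if H ≤ C then 1 else 0 := by
  have hdim := finrank_eq_of_mem_selfDualCodes hC
  have hset : {D | (D ∈ selfDualCodes σ (2 * n) ∧ finrank F ↥(C ⊓ D) + 1 = n) ∧ U ≤ D} =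
      {D | D.orthogonalBilin (standardForm σ (Fin (2 * n))) = D ∧ C ⊓ D ⋖ C ∧ U ≤ D} := by
    simp only [covBy_iff_finrank_add_one_eq inf_le_left, hdim, and_assoc]
    rfl
  rw [← natCast_ncard_setOf, hset, ncard_neighbors_eq hcard hσ standardForm_separatingLeft
    standardForm_isSymm hC hU, hdim, natCast_ncard_setOf, sum_filter]
  simp only [ite_and]

theorem supersetSum_heckeEnd (hcard : Fintype.card F = r ^ 2) (hσ : ∀ x, σ x = x ^ r)
    {U : Submodule F (Fin (2 * n) → F)}
    (hU : U ≤ U.orthogonalBilin (standardForm σ (Fin (2 * n))))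
    (v : ClassesB (selfDualCodes σ (2 * n)) → ℂ) :
    supersetSum _ U (heckeEnd _ n 1 v) =
      hermitianEigenvalue (Fintype.card F) r n (finrank F U) * supersetSum _ U v +
        ∑ H with H ⋖ U, supersetSum _ H v := by
  calc supersetSum _ U (heckeEnd _ n 1 v)
      = ∑ C, orbitSum _ v C * ∑ D,
          if (D ∈ selfDualCodes σ (2 * n) ∧ finrank F ↥(C ⊓ D) + 1 = n) ∧ U ≤ D then
            1 else 0 := by
        simp only [supersetSum_apply, heckeEnd_apply,
          orbitSum_heckeT permInvariant_selfDualCodes, sum_mul, mul_sum, mul_assoc,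
          ite_zero_mul_ite_zero, mul_one]
        exact sum_comm
    _ = ∑ C, orbitSum _ v C * (hermitianEigenvalue (Fintype.card F) r n (finrank F U) *
          (if U ≤ C then 1 else 0) + ∑ H with H ⋖ U, if H ≤ C then 1 else 0) := by
        refine sum_congr rfl fun C _ ↦ ?_
        by_cases hC : C ∈ selfDualCodes σ (2 * n)
        · rw [sum_neighbors_eq hcard hσ hC hU]
        · rw [orbitSum_eq_zero_of_notMem permInvariant_selfDualCodes v hC, zero_mul, zero_mul]
    _ = _ := by
        simp only [supersetSum_apply, mul_add, sum_add_distrib, mul_sum, mul_left_comm]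
        rw [sum_comm (s := univ.filter (· ⋖ U))]

theorem heckeEnd_sub_smul_mem_genusFiltration (hcard : Fintype.card F = r ^ 2)
    (hσ : ∀ x, σ x = x ^ r) (j : ℕ) (v : ClassesB (selfDualCodes σ (2 * n)) → ℂ)
    (hv : v ∈ genusFiltration _ j) :
    heckeEnd _ n 1 v - hermitianEigenvalue (Fintype.card F) r n j • v ∈
      genusFiltration _ (j + 1) := by
  refine mem_genusFiltration.2 fun U hU ↦ ?_
  rw [mem_genusFiltration] at hv
  by_cases hiso : U ≤ U.orthogonalBilin (standardForm σ (Fin (2 * n)))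
  · have hbelow : ∑ H with H ⋖ U, supersetSum _ H v = 0 := sum_eq_zero fun H hH ↦
      hv H ((finrank_lt_finrank_of_lt (mem_filter.1 hH).2.lt).trans_le (Nat.lt_succ_iff.1 hU))
    rw [map_sub, map_smul, supersetSum_heckeEnd hcard hσ hiso, hbelow, add_zero, smul_eq_mul,
      sub_eq_zero]
    obtain hlt | heq := (Nat.lt_succ_iff.1 hU).lt_or_eq
    · rw [hv U hlt, mul_zero, mul_zero]
    · rw [heq]
  · exact supersetSum_eq_zero permInvariant_selfDualCodes
      (fun C hC hUC ↦ hiso (le_orthogonalBilin_of_le hC hUC)) _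

end HermitianSelfDual

end KneserHeckeCodes

/-- For `q = r²` and `𝓕` the family of all Hermitian self-dual codes in
`F_q^{2n}`, the space `Y_m` is exactly the eigenspace of the Kneser-Hecke operator `T`
with eigenvalue `ν_m = (r·q^{n-m} - q^m - r + 1)/(q - 1)`. -/
theorem kneserHecke_eigenspace_qH
    {F : Type} [Field F] [Fintype F] (r : ℕ) (hr : IsPrimePow r)
    (hcard : Fintype.card F = r ^ 2) {n : ℕ}
    (𝓕 : Set (Submodule F (Fin (2 * n) → F)))
    (h𝓕 : 𝓕 = {C : Submodule F (Fin (2 * n) → F) | C = dualCode (fun x : F => x ^ r) C})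
    (h𝓕ne : 𝓕.Nonempty)
    (m : ℕ) (hm : m ≤ n) :
    YmSet 𝓕 m = {v : ClassesB 𝓕 → ℂ | heckeT 𝓕 n 1 v =
      ((((r : ℂ) * (Fintype.card F : ℂ) ^ (n - m) - (Fintype.card F : ℂ) ^ m -
          (r : ℂ) + 1) /
        ((Fintype.card F : ℂ) - 1)) • v)} := by
  obtain ⟨σ, hσ⟩ := exists_ringHom_apply_eq_pow hr hcard
  have : RingHomInvPair σ σ := ringHomInvPair_of_apply_eq_pow hcard hσ
  obtain rfl : 𝓕 = selfDualCodes σ (2 * n) := by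
    rw [h𝓕, ← funext hσ]
    exact Set.ext fun C ↦ eq_comm
  rw [YmSet_eq_orthogonalBilin_inf, orthogonalBilin_inf_eq_eigenspace
    (T := heckeEnd _ n 1) (ν := hermitianEigenvalue (Fintype.card F) r n)
    (fun _ ↦ eq_zero_of_innerForm_self_eq_zero)
    (innerForm_heckeEnd permInvariant_selfDualCodes n 1)
    (star_hermitianEigenvalue _ r n)
    (hermitianEigenvalue_injective Fintype.one_lt_card r n).injOn
    genusFiltration_antitone genusFiltration_zero
    (genusFiltration_eq_bot permInvariant_selfDualCodes fun _ ↦ finrank_eq_of_mem_selfDualCodes)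
    (fun j _ ↦ heckeEnd_sub_smul_mem_genusFiltration hcard hσ j) hm]
  exact Set.ext fun v ↦ Module.End.mem_eigenspace_iff
end
end

section
/- Assume every code in F contains the all-ones vector 1 = (1,…,1), and let M¹_m = {mon(c) : c = (c^(1),…,c^(m)) ∈ (F_q^N)^m with dim⟨1, c^(1),…,c^(m)⟩ = m+1}. If v ∈ V satisfies a_Y(v) = 0 for all Y ∈ M_{m−1} and a_X(v) = 0 for all X ∈ M¹_m, then a_X(v) = 0 for all X ∈ M_m. In other words, V_m = {v ∈ V_{m−1} : a_X(v) = 0 for all X ∈ M¹_m}. -/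
noncomputable section

open KneserHeckeCodes

/-!
Two `m`-tuples have the same monomial exactly when a coordinate permutation `π` carries one to
the other. So the tuples counted by `a_X(C)`, `X = mon c`, are those permutations of `c` that lie
in `C^m`. If one entry of `c` is a linear combination of `1` and the other entries, then the same
combination recovers the permuted entry from the other permuted ones, because `1` is fixed by every
`π`; and it stays in `C` because `1 ∈ C`. Hence deleting that entry does not change the count,
and `a_X` agrees with some `a_Y`, `Y ∈ M_{m-1}`. Such an entry exists as soon as
`1, c^(1), …, c^(m)` are linearly dependent.
-/

namespace KneserHeckeCodes

section LinearAlgebra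

variable {K M : Type*} [DivisionRing K] [AddCommGroup M] [Module K M] {m : ℕ}

theorem exists_mem_span_insert_range_removeNth {u : M} (hu : u ≠ 0) {c : Fin (m + 1) → M}
    (h : ¬ LinearIndependent K (Fin.cons u c : Fin (m + 2) → M)) :
    ∃ j, c j ∈ Submodule.span K (insert u (Set.range (j.removeNth c))) := by
  obtain ⟨g, hg, s, hs⟩ := Fintype.not_linearIndependent_iff.1 h
  simp only [Fin.sum_univ_succ (n := m + 1), Fin.cons_zero, Fin.cons_succ] at hg
  obtain ⟨j, hj⟩ : ∃ j : Fin (m + 1), g j.succ ≠ 0 := by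
    by_contra! hzero
    have hg0 : g 0 = 0 := by simpa [hzero, hu] using hg
    exact hs (Fin.cases hg0 hzero s)
  refine ⟨j, (Submodule.smul_mem_iff _ hj).1 ?_⟩
  have hcomb : g j.succ • c j =
      -(g 0 • u + ∑ t, g (j.succAbove t).succ • j.removeNth c t) := by
    rw [Fin.sum_univ_succAbove _ j, add_left_comm] at hg
    exact eq_neg_of_add_eq_zero_left hg
  rw [hcomb]
  refine neg_mem (add_mem (Submodule.smul_mem _ _ ?_)
    (sum_mem fun t _ => Submodule.smul_mem _ _ ?_))
  · exact Submodule.subset_span (Set.mem_insert _ _)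
  · exact Submodule.subset_span (Set.mem_insert_of_mem _ ⟨t, rfl⟩)

end LinearAlgebra

section Monomials

variable {F : Type} {m N : ℕ}

theorem mon_apply (c : Fin m → Fin N → F) (v : Fin m → F) :
    mon c v = Nat.card {i // Function.swap c i = v} := by
  simp only [mon, funext_iff, Function.swap]

theorem mon_comp_perm (c : Fin m → Fin N → F) (π : Equiv.Perm (Fin N)) :
    mon (fun j => c j ∘ π) = mon c :=
  funext fun _ => Nat.card_congr (π.subtypeEquiv fun _ => Iff.rfl)

theorem mon_eq_mon_iff {c d : Fin m → Fin N → F} :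
    mon d = mon c ↔ ∃ π : Equiv.Perm (Fin N), d = fun j => c j ∘ π := by
  refine ⟨fun h => ?_, ?_⟩
  · have hfiber (v : Fin m → F) :
        Nonempty ({i // Function.swap d i = v} ≃ {i // Function.swap c i = v}) :=
      Finite.card_eq.1 (by rw [← mon_apply, ← mon_apply, h])
    let e (v : Fin m → F) := (hfiber v).some
    refine ⟨Equiv.ofFiberEquiv e, funext₂ fun j i => ?_⟩
    exact (congrFun (Equiv.ofFiberEquiv_map e i) j).symm
  · rintro ⟨π, rfl⟩
    exact mon_comp_perm c π

theorem MmSet_eq_range_mon [Fintype F] :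
    MmSet F m N = Set.range (mon : (Fin m → Fin N → F) → (Fin m → F) → ℕ) := by
  ext X
  constructor
  · intro hX
    have hcard : Fintype.card (Fin N) = Fintype.card (Σ v, Fin (X v)) := by
      simpa using Eq.symm hX
    let e : Fin N ≃ Σ v, Fin (X v) := Fintype.equivOfCardEq hcard
    refine ⟨fun j i => (e i).1 j, funext fun v => ?_⟩
    calc mon (fun j i => (e i).1 j) v
        = Nat.card {x : Σ v, Fin (X v) // x.1 = v} := by
          rw [mon_apply]
          exact Nat.card_congr (e.subtypeEquiv fun _ => Iff.rfl)
      _ = X v := by rw [Nat.card_congr (Equiv.sigmaSubtype v), Nat.card_fin]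
  · rintro ⟨c, rfl⟩
    calc ∑ v, mon c v = Nat.card (Σ v, {i // Function.swap c i = v}) := by
          simp only [mon_apply, Nat.card_sigma]
      _ = N := by rw [Nat.card_congr (Equiv.sigmaFiberEquiv _), Nat.card_fin]

end Monomials

section DependentEntry

variable {F : Type} [Field F] {m N : ℕ} {C : Submodule F (Fin N → F)} {u : Fin N → F}
  {c : Fin (m + 1) → Fin N → F} {j : Fin (m + 1)}

theorem injOn_removeNth_of_mem_span (hu : ∀ π : Equiv.Perm (Fin N), u ∘ π = u)
    (hj : c j ∈ Submodule.span F (insert u (Set.range (j.removeNth c)))) :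
    Set.InjOn j.removeNth {d : Fin (m + 1) → Fin N → F | mon d = mon c} := by
  intro d hd e he hde
  obtain ⟨π, rfl⟩ := mon_eq_mon_iff.1 hd
  obtain ⟨ρ, rfl⟩ := mon_eq_mon_iff.1 he
  have hagree : Set.EqOn (LinearMap.funLeft F F π) (LinearMap.funLeft F F ρ)
      (insert u (Set.range (j.removeNth c))) := by
    rintro _ (rfl | ⟨t, rfl⟩)
    · exact (hu π).trans (hu ρ).symm
    · exact congrFun hde t
  have hcj : c j ∘ π = c j ∘ ρ := LinearMap.eqOn_span hagree hj
  exact funext ((Fin.forall_iff_succAbove j).2 ⟨hcj, congrFun hde⟩)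

theorem bijOn_removeNth_of_mem_span (hu : ∀ π : Equiv.Perm (Fin N), u ∘ π = u) (huC : u ∈ C)
    (hj : c j ∈ Submodule.span F (insert u (Set.range (j.removeNth c)))) :
    Set.BijOn j.removeNth {d | (∀ i, d i ∈ C) ∧ mon d = mon c}
      {d | (∀ i, d i ∈ C) ∧ mon d = mon (j.removeNth c)} := by
  refine ⟨?_, (injOn_removeNth_of_mem_span hu hj).mono fun _ => And.right, ?_⟩
  · rintro d ⟨hdC, hd⟩
    obtain ⟨π, rfl⟩ := mon_eq_mon_iff.1 hd
    exact ⟨fun t => hdC _, mon_comp_perm (j.removeNth c) π⟩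
  · rintro d ⟨hdC, hd⟩
    obtain ⟨π, rfl⟩ := mon_eq_mon_iff.1 hd
    have hgen : insert u (Set.range (j.removeNth c)) ⊆ C.comap (LinearMap.funLeft F F π) := by
      rintro _ (rfl | ⟨t, rfl⟩)
      · change _ ∘ π ∈ C
        rwa [hu π]
      · exact hdC t
    have hcj : c j ∘ π ∈ C := Submodule.span_le.2 hgen hj
    exact ⟨fun i => c i ∘ π, ⟨(Fin.forall_iff_succAbove j).2 ⟨hcj, hdC⟩, mon_comp_perm c π⟩, rfl⟩

theorem aX_mon_removeNth (hu : ∀ π : Equiv.Perm (Fin N), u ∘ π = u) (huC : u ∈ C)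
    (hj : c j ∈ Submodule.span F (insert u (Set.range (j.removeNth c)))) :
    aX (mon (j.removeNth c)) C = aX (mon c) C :=
  (Nat.card_congr (bijOn_removeNth_of_mem_span hu huC hj).equiv).symm

theorem exists_mem_span_of_finrank_ne
    (h : Module.finrank F (Submodule.span F (insert (allOnes F N) (Set.range c))) ≠ m + 1 + 1) :
    ∃ j, c j ∈ Submodule.span F (insert (allOnes F N) (Set.range (j.removeNth c))) := by
  rcases isEmpty_or_nonempty (Fin N) with hN | hN
  · exact ⟨0, Subsingleton.elim 0 (c 0) ▸ zero_mem _⟩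
  · have hones : allOnes F N ≠ 0 := fun h0 => one_ne_zero (congrFun h0 hN.some)
    refine exists_mem_span_insert_range_removeNth hones fun hindep => h ?_
    rw [← Fin.range_cons, finrank_span_eq_card hindep, Fintype.card_fin]

end DependentEntry

section JointKernels

variable {F : Type} [Field F] [Fintype F] {N : ℕ} {𝓕 : Set (Submodule F (Fin N → F))}
  {v : ClassesB 𝓕 → ℂ}

theorem aXc_congr {m k : ℕ} {X : (Fin m → F) → ℕ} {Y : (Fin k → F) → ℕ}
    (h : ∀ C ∈ 𝓕, aX X C = aX Y C) : aXc 𝓕 X v = aXc 𝓕 Y v := by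
  simp only [aXc, h _ (repB _).2]

theorem mem_VmSet_iff {m : ℕ} :
    v ∈ VmSet 𝓕 m ↔ ∀ c : Fin m → Fin N → F, aXc 𝓕 (mon c) v = 0 := by
  rw [VmSet, MmSet_eq_range_mon]
  exact Set.forall_mem_range

theorem VmSet_succ_subset (𝓕 : Set (Submodule F (Fin N → F))) (m : ℕ) :
    VmSet 𝓕 (m + 1) ⊆ VmSet 𝓕 m := by
  intro v hv
  refine mem_VmSet_iff.2 fun d => ?_
  let c : Fin (m + 1) → Fin N → F := Fin.cons 0 d
  have hc : Fin.removeNth 0 c = d := Fin.removeNth_zero _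
  calc aXc 𝓕 (mon d) v
      = aXc 𝓕 (mon c) v := by
        rw [← hc]
        exact aXc_congr fun C _ =>
          aX_mon_removeNth (u := 0) (fun _ => rfl) (zero_mem C) (zero_mem _)
    _ = 0 := mem_VmSet_iff.1 hv c

theorem Vm_eq_of_allOnes_general (hone : ∀ C ∈ 𝓕, allOnes F N ∈ C) (m : ℕ) :
    VmSet 𝓕 (m + 1) = {v : ClassesB 𝓕 → ℂ | v ∈ VmSet 𝓕 m ∧
      ∀ X ∈ {X : (Fin (m + 1) → F) → ℕ | ∃ c : Fin (m + 1) → (Fin N → F), mon c = X ∧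
          Module.finrank F
            ↥(Submodule.span F (insert (allOnes F N) (Set.range c))) = m + 1 + 1},
        aXc 𝓕 X v = 0} := by
  ext v
  constructor
  · refine fun hv => ⟨VmSet_succ_subset 𝓕 m hv, ?_⟩
    rintro _ ⟨c, rfl, -⟩
    exact mem_VmSet_iff.1 hv c
  · rintro ⟨hv, hM1⟩
    refine mem_VmSet_iff.2 fun c => ?_
    by_cases hc : Module.finrank F
        (Submodule.span F (insert (allOnes F N) (Set.range c))) = m + 1 + 1
    · exact hM1 _ ⟨c, rfl, hc⟩
    · obtain ⟨j, hj⟩ := exists_mem_span_of_finrank_ne hc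
      calc aXc 𝓕 (mon c) v
          = aXc 𝓕 (mon (j.removeNth c)) v :=
            aXc_congr fun C hC => (aX_mon_removeNth (fun _ => rfl) (hone C hC) hj).symm
        _ = 0 := mem_VmSet_iff.1 hv _

end JointKernels

end KneserHeckeCodes

/-- If every code in `𝓕` contains the all-ones vector, then with
`M¹_m = {mon(c) : dim⟨1, c^(1), …, c^(m)⟩ = m + 1}` one has
`V_m = {v ∈ V_{m-1} : a_X(v) = 0 for all X ∈ M¹_m}`. -/
theorem Vm_eq_of_allOnes
    {F : Type} [Field F] [Fintype F] {n : ℕ}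
    (σ : F →+* F) (hσ : ∀ x, σ (σ x) = x)
    (𝓕 : Set (Submodule F (Fin (2 * n) → F)))
    (h𝓕ne : 𝓕.Nonempty)
    (h𝓕sd : ∀ C ∈ 𝓕, C = dualCode (⇑σ) C)
    (h𝓕cl : ∀ C ∈ 𝓕, ∀ π : Equiv.Perm (Fin (2 * n)), permCode π C ∈ 𝓕)
    (hone : ∀ C ∈ 𝓕, allOnes F (2 * n) ∈ C)
    (m : ℕ) (hm : 1 ≤ m) :
    VmSet 𝓕 m = {v : ClassesB 𝓕 → ℂ | v ∈ VmSet 𝓕 (m - 1) ∧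
      ∀ X ∈ {X : (Fin m → F) → ℕ | ∃ c : Fin m → (Fin (2 * n) → F), mon c = X ∧
          Module.finrank F
            ↥(Submodule.span F (insert (allOnes F (2 * n)) (Set.range c))) = m + 1},
        aXc 𝓕 X v = 0} := by
  obtain ⟨k, rfl⟩ := Nat.exists_eq_add_of_le' hm
  exact Vm_eq_of_allOnes_general hone k
end
end
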